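/- arXiv:1310.2754 — 2 statements merged into one kernel-verified Lean document; each statement's English description precedes it below -/
import Mathlib

section
/- Let $(\Delta_0,m_0)$ be a finite measure space and let $\{\Lambda_i\}_{i\in I}$, $I\subseteq\mathbb N$, be pairwise disjoint measurable subsets of $\Delta_0$ with $m_0(\Lambda_i)>0$ and $m_0(\Delta_0\setminus\bigcup_i\Lambda_i)=0$. Let $R_i\ge 1$ be integers with $\gcd\{R_i\}=1$, and let $R:\Delta_0\to\{1,2,\dots\}$ be measurable with $R=R_i$ on $\Lambda_i$. Let $F^R:\Delta_0\to\Delta_0$ be a measurable map which sends each $\Lambda_i$ bijectively onto $\Delta_0$, and assume that the partition is generating: every measurable subset of $\Delta_0$ coincides, up to an $m_0$-null set, with a set of the $\sigma$-algebra generated by the sets $(F^R)^{-n}(\Lambda_i)$, $n\ge 0$, $i\in I$. For $x,y\in\Delta_0$ let $s(x,y)\in\{0,1,\dots\}\cup\{\infty\}$ be the least $n\ge 0$ such that $(F^R)^n(x)$ and $(F^R)^n(y)$ do not lie in a common $\Lambda_i$ ($\infty$ if there is none). Assume that $F^R$ has a measurable Jacobian $JF^R$ with respect to $m_0$, strictly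 positive on each $\Lambda_i$ (that is, $m_0(F^R(A))=\int_A JF^R\,dm_0$ for every measurable $A$ contained in a single $\Lambda_i$), and that there are $C_F>0$ and $0<\beta<1$ with $$\left|\log\frac{JF^R(x)}{JF^R(y)}\right|\le C_F\,\beta^{s(F^R(x),F^R(y))}\qquad\text{for all } x,y \text{ in the same } \Lambda_i,$$ where $\beta^\infty=0$. Let $\Delta=\{(x,l):x\in\Delta_0,\ 0\le l<R(x)\}$ be the tower, with the tower map $F(x,l)=(x,l+1)$ if $l+1<R(x)$ and $F(x,l)=(F^R(x),0)$ if $l+1=R(x)$, with the measure $m$ which on each level $\Delta_l=\{(x,l)\in\Delta\}$ is the copy of $m_0$ restricted to $\{R>l\}$, and with the sets $\Delta_{l,i}=\{(x,l)\in\Delta:x\in\Lambda_i\}$. Put $s((x,l),(y,l'))=s(x,y)$ if the two points lie in the same $\Delta_{l,i}$, and $s((x,l),(y,l'))=0$ otherwise. Let $\mathcal F_\beta^+$ be the set of functions $\varphi:\Delta\to\mathbb R$ for which there is $C_\varphi>0$ such that $|\varphi(p)-\varphi(q)|\le C_\varphi\beta^{s(p,q)}$ for all $p,q\in\Delta$,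 and such that on each $\Delta_{l,i}$ either $\varphi\equiv 0$, or $\varphi>0$ and $|\varphi(p)/\varphi(q)-1|\le C_\varphi\beta^{s(p,q)}$ for all $p,q\in\Delta_{l,i}$. Assume that $R$ is integrable with respect to $m_0$. Then: 1. $F$ has a unique invariant probability measure $\nu$ on $\Delta$ which is equivalent to $m$; 2. the density $d\nu/dm$ (has a measurable version which) belongs to $\mathcal F_\beta^+$ and is bounded below by a strictly positive constant; 3. the system $(F,\nu)$ is mixing, i.e. $\nu(F^{-n}(A)\cap B)\to\nu(A)\nu(B)$ as $n\to\infty$ for all measurable $A,B\subseteq\Delta$. -/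
open MeasureTheory Filter Set Topology

noncomputable section

/-- `β ^ s` for an extended-natural separation time, with the convention `β ^ ∞ = 0`. -/
def epow (β : ℝ) (n : ℕ∞) : ℝ := if n = ⊤ then 0 else β ^ n.toNat

/-- The separation time of `x` and `y`: the least `n` such that the `n`-th iterates under the
return map do not lie in a common element of the partition (`∞` if there is no such `n`). -/
def sepTime {Δ₀ : Type*} (I : Set ℕ) (Λ : ℕ → Set Δ₀) (FR : Δ₀ → Δ₀) (x y : Δ₀) : ℕ∞ :=
  ⨅ n ∈ {n : ℕ | ¬ ∃ i ∈ I, FR^[n] x ∈ Λ i ∧ FR^[n] y ∈ Λ i}, (n : ℕ∞)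

/-- The σ-algebra generated by the sets `(F^R)⁻ⁿ(Λ_i)`, `n ≥ 0`, `i ∈ I`, that is, by the cylinders
of the return map. -/
abbrev cylinderSigma {Δ₀ : Type*} (I : Set ℕ) (Λ : ℕ → Set Δ₀) (FR : Δ₀ → Δ₀) :
    MeasurableSpace Δ₀ :=
  MeasurableSpace.generateFrom {A | ∃ n : ℕ, ∃ i ∈ I, A = FR^[n] ⁻¹' Λ i}

/-- The data of a Young tower over the base `Δ₀`. -/
structure YoungTower (Δ₀ : Type*) [MeasurableSpace Δ₀] where
  /-- the reference measure on the base -/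
  m₀ : Measure Δ₀
  m₀_finite : IsFiniteMeasure m₀
  /-- the index set of the partition -/
  I : Set ℕ
  /-- the elements of the partition (mod `m₀`) of the base; only `Λ i` with `i ∈ I` matter -/
  Λ : ℕ → Set Δ₀
  Λ_meas : ∀ i ∈ I, MeasurableSet (Λ i)
  Λ_disj : I.PairwiseDisjoint Λ
  Λ_pos : ∀ i ∈ I, 0 < m₀ (Λ i)
  Λ_full : m₀ (univ \ ⋃ i ∈ I, Λ i) = 0
  /-- the return times `R_i` -/
  Ret : ℕ → ℕ
  Ret_pos : ∀ i ∈ I, 1 ≤ Ret i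
  /-- the greatest common divisor of the `R_i` is `1` -/
  Ret_gcd : ∀ d : ℕ, (∀ i ∈ I, d ∣ Ret i) → d = 1
  /-- the return time as a function on the base -/
  R : Δ₀ → ℕ
  R_meas : Measurable R
  R_pos : ∀ x, 0 < R x
  R_eq : ∀ i ∈ I, ∀ x ∈ Λ i, R x = Ret i
  /-- the return map `F^R` -/
  FR : Δ₀ → Δ₀
  FR_meas : Measurable FR
  FR_bij : ∀ i ∈ I, BijOn FR (Λ i) univ
  /-- the partition is generating: mod `m₀`, every measurable set belongs to the σ-algebra
  generated by the cylinders of the return map -/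
  generating : ∀ A : Set Δ₀, MeasurableSet A →
    ∃ B : Set Δ₀, MeasurableSet[cylinderSigma I Λ FR] B ∧ A =ᵐ[m₀] B
  /-- the Jacobian of the return map with respect to `m₀` -/
  JFR : Δ₀ → ℝ
  JFR_meas : Measurable JFR
  JFR_pos : ∀ i ∈ I, ∀ x ∈ Λ i, 0 < JFR x
  JFR_jac : ∀ i ∈ I, ∀ A : Set Δ₀, A ⊆ Λ i → MeasurableSet A →
    m₀ (FR '' A) = ∫⁻ x in A, ENNReal.ofReal (JFR x) ∂m₀
  /-- the distortion constant -/
  CF : ℝ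
  /-- the distortion rate -/
  β : ℝ
  CF_pos : 0 < CF
  β_pos : 0 < β
  β_lt_one : β < 1
  distortion : ∀ i ∈ I, ∀ x ∈ Λ i, ∀ y ∈ Λ i,
    |Real.log (JFR x / JFR y)| ≤ CF * epow β (sepTime I Λ FR (FR x) (FR y))

attribute [instance] YoungTower.m₀_finite

namespace YoungTower

variable {Δ₀ : Type*} [MeasurableSpace Δ₀] (T : YoungTower Δ₀)

/-- Separation time on the base. -/
def sep (x y : Δ₀) : ℕ∞ := sepTime T.I T.Λ T.FR x y

/-- The tower `Δ = {(x, l) : x ∈ Δ₀, 0 ≤ l < R x}`, with the σ-algebra induced by `Δ₀ × ℕ`. -/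
abbrev Tower : Type _ := {p : Δ₀ × ℕ // p.2 < T.R p.1}

/-- The tower map `F`. -/
def towerMap (p : T.Tower) : T.Tower :=
  if h : p.1.2 + 1 < T.R p.1.1 then ⟨(p.1.1, p.1.2 + 1), h⟩
  else ⟨(T.FR p.1.1, 0), T.R_pos _⟩

/-- The reference measure `m` on the tower: on the `l`-th level it is the copy of `m₀`
restricted to `{R > l}`. -/
def towerMeasure : Measure T.Tower :=
  (Measure.sum fun l : ℕ =>
    (T.m₀.restrict {x | l < T.R x}).map fun x => (x, l)).comap Subtype.val

/-- The partition element `Δ_{l,i}` of the tower. -/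
def pieceSet (l i : ℕ) : Set T.Tower := {p | p.1.2 = l ∧ p.1.1 ∈ T.Λ i}

/-- Two points of the tower lie in the same partition element `Δ_{l,i}`. -/
def samePiece (p q : T.Tower) : Prop :=
  ∃ l : ℕ, ∃ i ∈ T.I, p ∈ T.pieceSet l i ∧ q ∈ T.pieceSet l i

open Classical in
/-- Separation time on the tower: the separation time of the base points if the two points
lie in the same partition element `Δ_{l,i}`, and `0` otherwise. -/
def sepTower (p q : T.Tower) : ℕ∞ :=
  if T.samePiece p q then T.sep p.1.1 q.1.1 else 0

/-- Membership in `F_β`: `|φ p - φ q| ≤ C * β ^ s(p,q)` on the whole tower. -/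
def memF (φ : T.Tower → ℝ) : Prop :=
  ∃ C : ℝ, 0 < C ∧ ∀ p q : T.Tower, |φ p - φ q| ≤ C * epow T.β (T.sepTower p q)

/-- Membership in `F_β⁺`: `φ ∈ F_β` and, for some constant `C`, on each `Δ_{l,i}` either `φ ≡ 0`,
or `φ > 0` and `|φ p / φ q - 1| ≤ C * β ^ s(p,q)`. -/
def memFplus (φ : T.Tower → ℝ) : Prop :=
  T.memF φ ∧ ∃ C : ℝ, 0 < C ∧ ∀ l : ℕ, ∀ i ∈ T.I,
    (∀ p ∈ T.pieceSet l i, φ p = 0) ∨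
    ((∀ p ∈ T.pieceSet l i, 0 < φ p) ∧
      ∀ p ∈ T.pieceSet l i, ∀ q ∈ T.pieceSet l i,
        |φ p / φ q - 1| ≤ C * epow T.β (T.sepTower p q))

/-- Mixing of `(F, ν)`. -/
def Mixing (ν : Measure T.Tower) : Prop :=
  ∀ A B : Set T.Tower, MeasurableSet A → MeasurableSet B →
    Tendsto (fun n : ℕ => ν (T.towerMap^[n] ⁻¹' A ∩ B)) atTop (𝓝 (ν A * ν B))

end YoungTower

end

/-!
On a cylinder of length `k` the densities of the measures `(F^R)ⁿ_* m₀` oscillate at most by the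
factor `exp (K β ^ k)`, uniformly in `n`. Such a bound survives averages and limits, so a limit of
Cesàro means is an `F^R`-invariant measure `η` with a regular density, and copying `η` to all levels
of the tower gives an `F`-invariant measure `ν`, finite because `R` is integrable.

For mixing, fix a cylinder `B` and an ultrafilter on the times. The weak `L²` limits `h j` of the
densities of the measures `A ↦ ν (F^{-(n + j)} A ∩ B)` form a backward orbit, `h j = h (j + 1) ∘ F`,
and have the same bounded distortion on the base. Going back along a cylinder of length `k` carries
the values of `h j` on the whole base to those of an earlier `h j'` on that cylinder, where they
agree up to `exp (K β ^ k)`; hence each `h j` is constant on the base. The constants are periodic in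
`j` with all the periods `R_i`, so they do not depend on `j`, since the `R_i` have greatest common
divisor `1`. Thus `h 0` is constant, equal to `ν B`, whatever the ultrafilter. Cylinders form a
generating π-system, and ergodicity gives uniqueness.
-/

noncomputable section

open scoped ENNReal

section Measure

variable {α ι : Type*} [MeasurableSpace α]

lemma measure_eq_tsum_inter_of_ae_mem [Countable ι] {μ : Measure α} {s : ι → Set α}
    (hs : ∀ i, MeasurableSet (s i)) (hd : Pairwise (Function.onFun Disjoint s))
    (h : ∀ᵐ x ∂μ, ∃ i, x ∈ s i) (A : Set α) : μ A = ∑' i, μ (s i ∩ A) := by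
  have hμ : μ = Measure.sum fun i => μ.restrict (s i) := by
    rw [← Measure.restrict_iUnion hd hs, Measure.restrict_eq_self_of_ae_mem (by simpa using h)]
  conv_lhs => rw [hμ, Measure.sum_apply_of_countable]
  exact tsum_congr fun i => by rw [Measure.restrict_apply' (hs i), inter_comm]

lemma tendsto_ennreal_tsum_of_dominated {l : Filter ι} {β : Type*} {f : ι → β → ℝ≥0∞}
    {g bound : β → ℝ≥0∞} (hbound : ∑' b, bound b ≠ ⊤) (hle : ∀ n b, f n b ≤ bound b)
    (hlim : ∀ b, Tendsto (f · b) l (𝓝 (g b))) :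
    Tendsto (fun n => ∑' b, f n b) l (𝓝 (∑' b, g b)) := by
  rcases l.eq_or_neBot with rfl | hl
  · exact tendsto_bot
  have hfin : ∀ b, bound b ≠ ⊤ := ENNReal.ne_top_of_tsum_ne_top hbound
  have hgle : ∀ b, g b ≤ bound b := fun b => le_of_tendsto (hlim b) (.of_forall (hle · b))
  have hf : ∀ n b, f n b ≠ ⊤ := fun n b => ne_top_of_le_ne_top (hfin b) (hle n b)
  have hg : ∀ b, g b ≠ ⊤ := fun b => ne_top_of_le_ne_top (hfin b) (hgle b)
  rw [← ENNReal.tendsto_toReal_iff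
    (fun n => ne_top_of_le_ne_top hbound (ENNReal.tsum_le_tsum (hle n)))
    (ne_top_of_le_ne_top hbound (ENNReal.tsum_le_tsum hgle))]
  simp only [ENNReal.tsum_toReal_eq hg, ENNReal.tsum_toReal_eq (hf _)]
  refine tendsto_tsum_of_dominated_convergence (ENNReal.summable_toReal hbound)
    (fun b => (ENNReal.tendsto_toReal (hg b)).comp (hlim b)) (.of_forall fun n b => ?_)
  rw [Real.norm_of_nonneg ENNReal.toReal_nonneg]
  exact ENNReal.toReal_mono (hfin b) (hle n b)

lemma exists_le_tendsto_ultrafilter_of_le {m : Measure α} [IsFiniteMeasure m]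
    {μ : ι → Measure α} (hμ : ∀ n, μ n ≤ m) (𝓤 : Ultrafilter ι) :
    ∃ η ≤ m, ∀ A, MeasurableSet A → Tendsto (fun n => μ n A) 𝓤 (𝓝 (η A)) := by
  have hlim : ∀ A, ∃ a, Tendsto (fun n => μ n A) 𝓤 (𝓝 a) := fun A =>
    (isCompact_univ.ultrafilter_le_nhds (𝓤.map fun n => μ n A) (by simp)).imp fun _ h => h.2
  choose L hL using hlim
  have hLle : ∀ A, L A ≤ m A := fun A => le_of_tendsto (hL A) (.of_forall fun n => hμ n A)
  have hUnion : ∀ f : ℕ → Set α, (∀ i, MeasurableSet (f i)) →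
      Pairwise (Function.onFun Disjoint f) → L (⋃ i, f i) = ∑' i, L (f i) := by
    intro f hf hd
    refine tendsto_nhds_unique (hL _) ?_
    simp only [measure_iUnion hd hf]
    refine tendsto_ennreal_tsum_of_dominated (bound := fun i => m (f i)) ?_
      (fun n i => hμ n (f i)) fun i => hL (f i)
    exact measure_iUnion hd hf ▸ measure_ne_top m _
  let η := Measure.ofMeasurable (fun A _ => L A) (by simpa using hLle ∅) hUnion
  have hη : ∀ A, MeasurableSet A → η A = L A := Measure.ofMeasurable_apply
  exact ⟨η, Measure.le_iff.2 fun A hA => hη A hA ▸ hLle A, fun A hA => hη A hA ▸ hL A⟩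

lemma tendsto_measure_inter_of_isPiSystem {μ : Measure α} [IsFiniteMeasure μ]
    {C : Set (Set α)} (hC : IsPiSystem C) (hCm : ∀ B ∈ C, MeasurableSet B)
    (hgen : ∀ B, MeasurableSet B →
      ∃ B', MeasurableSet[MeasurableSpace.generateFrom C] B' ∧ B =ᵐ[μ] B')
    {S : ι → Set α} {l : Filter ι} {c : ℝ≥0∞}
    (huniv : Tendsto (fun n => μ (S n)) l (𝓝 (c * μ univ)))
    (h : ∀ B ∈ C, Tendsto (fun n => μ (S n ∩ B)) l (𝓝 (c * μ B)))
    {B : Set α} (hB : MeasurableSet B) :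
    Tendsto (fun n => μ (S n ∩ B)) l (𝓝 (c * μ B)) := by
  refine (tendsto_iff_ultrafilter _ _ _).2 fun 𝓤 h𝓤 => ?_
  obtain ⟨ν, hνle, hν⟩ := exists_le_tendsto_ultrafilter_of_le
    (fun n => Measure.restrict_le_self (μ := μ) (s := S n)) 𝓤
  have hrestrict : ∀ n A, MeasurableSet A → μ.restrict (S n) A = μ (S n ∩ A) :=
    fun n A hA => by rw [Measure.restrict_apply hA, inter_comm]
  have hν_eq : ∀ A, MeasurableSet A → Tendsto (fun n => μ (S n ∩ A)) l (𝓝 (c * μ A)) →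
      ν A = (c • μ) A := fun A hA hlim => by
    have := hν A hA
    simp only [hrestrict _ A hA] at this
    simpa using tendsto_nhds_unique this (hlim.mono_left h𝓤)
  have : IsFiniteMeasure ν := isFiniteMeasure_of_le μ hνle
  obtain ⟨B', hB', hBB'⟩ := hgen B hB
  have hνB : ν B = c * μ B := by
    rw [measure_congr hBB', measure_congr (hνle.absolutelyContinuous.ae_le hBB')]
    exact ext_on_measurableSpace_of_generate_finite _ C
      (fun A hA => hν_eq A (hCm A hA) (h A hA)) (MeasurableSpace.generateFrom_le hCm) rfl hC
      (hν_eq univ .univ (by simpa using huniv)) hB'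
  simpa only [hrestrict _ B hB, hνB] using hν B hB

lemma setLIntegral_le_of_forall_mul_le {μ : Measure α} {f : α → ℝ≥0∞} {A : Set α}
    (hA : MeasurableSet A) (hμA : μ A ≠ ⊤) {c : ℝ≥0∞} (h : ∀ x ∈ A, f x * μ A ≤ c) :
    ∫⁻ x in A, f x ∂μ ≤ c := by
  rcases eq_or_ne (μ A) 0 with h0 | h0
  · simp [Measure.restrict_eq_zero.2 h0]
  calc ∫⁻ x in A, f x ∂μ ≤ ∫⁻ _ in A, c / μ A ∂μ :=
        setLIntegral_mono' hA fun x hx =>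
          (ENNReal.le_div_iff_mul_le (.inl h0) (.inl hμA)).2 (h x hx)
    _ = c := by rw [setLIntegral_const, ENNReal.div_mul_cancel h0 hμA]

lemma le_setLIntegral_of_forall_le_mul {μ : Measure α} {f : α → ℝ≥0∞} {A : Set α}
    (hA : MeasurableSet A) (h0 : μ A ≠ 0) (hμA : μ A ≠ ⊤) {c : ℝ≥0∞}
    (h : ∀ x ∈ A, c ≤ f x * μ A) : c ≤ ∫⁻ x in A, f x ∂μ := by
  calc c = ∫⁻ _ in A, c / μ A ∂μ := by rw [setLIntegral_const, ENNReal.div_mul_cancel h0 hμA]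
    _ ≤ ∫⁻ x in A, f x ∂μ := setLIntegral_mono' hA fun x hx => ENNReal.div_le_of_le_mul (h x hx)

lemma map_withDensity_comp {α' : Type*} [MeasurableSpace α'] {μ : Measure α} {f : α → α'}
    (hf : Measurable f) {g : α' → ℝ≥0∞} (hg : Measurable g) :
    (μ.withDensity (g ∘ f)).map f = (μ.map f).withDensity g := by
  refine Measure.ext fun A hA => ?_
  rw [Measure.map_apply hf hA, withDensity_apply _ (hf hA), withDensity_apply _ hA,
    setLIntegral_map hA hg hf]
  rfl

lemma exists_ae_eq_const_of_forall_le {X : Type*} [CompleteLinearOrder X] [DenselyOrdered X]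
    [TopologicalSpace X] [OrderTopology X] [FirstCountableTopology X] {μ : Measure α}
    {f : α → X}
    (h : ∀ a b, μ {x | f x ≤ a} ≠ 0 → μ {x | b ≤ f x} ≠ 0 → b ≤ a) :
    ∃ c, f =ᵐ[μ] fun _ => c := by
  have hle : essSup f μ ≤ essInf f μ := by
    refine le_of_forall_gt_imp_ge_of_dense fun a ha =>
      le_of_forall_lt_imp_le_of_dense fun b hb => ?_
    refine h a b (fun ha0 => ?_) fun hb0 => ?_
    · refine ha.not_ge (le_essInf_of_ae_le a ?_)
      filter_upwards [measure_eq_zero_iff_ae_notMem.1 ha0] with x hx using (not_le.1 hx).le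
    · refine hb.not_ge (essSup_le_of_ae_le b ?_)
      filter_upwards [measure_eq_zero_iff_ae_notMem.1 hb0] with x hx using (not_le.1 hx).le
  refine ⟨essSup f μ, ?_⟩
  filter_upwards [ae_le_essSup (f := f) (μ := μ), ae_essInf_le (f := f) (μ := μ)] with x h₁ h₂
  exact h₁.antisymm (hle.trans h₂)

end Measure

section Dynamics

variable {α : Type*} [MeasurableSpace α]

/-- The Cesàro mean `(n + 1)⁻¹ ∑_{k ≤ n} (f^k)_* m` of the push-forwards of `m`; it has `n + 1`
terms, so that its mass is always that of `m`. -/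
def cesaroMean (f : α → α) (m : Measure α) (n : ℕ) : Measure α :=
  ((n : ℝ≥0∞) + 1)⁻¹ • ∑ k ∈ Finset.range (n + 1), m.map f^[k]

variable {f : α → α} {m M : Measure α}

lemma cesaroMean_apply (n : ℕ) (A : Set α) : cesaroMean f m n A =
    ((n : ℝ≥0∞) + 1)⁻¹ * ∑ k ∈ Finset.range (n + 1), m.map f^[k] A := by
  simp [cesaroMean]

lemma cesaroMean_le (h : ∀ n, m.map f^[n] ≤ M) (n : ℕ) : cesaroMean f m n ≤ M := by
  refine Measure.le_iff.2 fun A _ => ?_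
  calc cesaroMean f m n A ≤ ((n : ℝ≥0∞) + 1)⁻¹ * ∑ _k ∈ Finset.range (n + 1), M A := by
        rw [cesaroMean_apply]
        gcongr with k
        exact h k
    _ = M A := by
        rw [Finset.sum_const, Finset.card_range, nsmul_eq_mul, Nat.cast_succ, ← mul_assoc,
          ENNReal.inv_mul_cancel (by simp) (by finiteness), one_mul]

lemma cesaroMean_univ (hf : Measurable f) (n : ℕ) : cesaroMean f m n univ = m univ := by
  simp only [cesaroMean_apply, Measure.map_apply (hf.iterate _) .univ, preimage_univ,
    Finset.sum_const, Finset.card_range, nsmul_eq_mul, Nat.cast_succ]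
  rw [← mul_assoc, ENNReal.inv_mul_cancel (by simp) (by finiteness), one_mul]

lemma cesaroMean_preimage_add (hf : Measurable f) (n : ℕ) {A : Set α} (hA : MeasurableSet A) :
    cesaroMean f m n (f ⁻¹' A) + ((n : ℝ≥0∞) + 1)⁻¹ * m A =
      cesaroMean f m n A + ((n : ℝ≥0∞) + 1)⁻¹ * m.map f^[n + 1] A := by
  have hshift : ∀ k, m.map f^[k] (f ⁻¹' A) = m.map f^[k + 1] A := fun k => by
    rw [Measure.map_apply (hf.iterate k) (hf hA), Measure.map_apply (hf.iterate _) hA,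
      Function.iterate_succ', preimage_comp]
  have hm : m A = m.map f^[0] A := by simp
  rw [cesaroMean_apply, cesaroMean_apply, ← mul_add, ← mul_add, ← Finset.sum_range_succ, hm,
    Finset.sum_range_succ' (fun k => m.map f^[k] A)]
  simp only [hshift]

lemma exists_measurePreserving_tendsto_cesaroMean [IsFiniteMeasure M]
    (hf : Measurable f) (h : ∀ n, m.map f^[n] ≤ M) (𝓤 : Ultrafilter ℕ)
    (h𝓤 : (𝓤 : Filter ℕ) ≤ atTop) :
    ∃ η, MeasurePreserving f η η ∧
      ∀ A, MeasurableSet A → Tendsto (fun n => cesaroMean f m n A) 𝓤 (𝓝 (η A)) := by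
  obtain ⟨η, -, hlim⟩ := exists_le_tendsto_ultrafilter_of_le (cesaroMean_le h) 𝓤
  refine ⟨η, ⟨hf, Measure.ext fun A hA => ?_⟩, hlim⟩
  have hinv : Tendsto (fun n : ℕ => ((n : ℝ≥0∞) + 1)⁻¹) atTop (𝓝 0) := by
    simpa using (tendsto_add_atTop_iff_nat 1).2 ENNReal.tendsto_inv_nat_nhds_zero
  have hsmall : ∀ c : ℕ → ℝ≥0∞, (∀ n, c n ≤ M A) →
      Tendsto (fun n : ℕ => ((n : ℝ≥0∞) + 1)⁻¹ * c n) 𝓤 (𝓝 0) := fun c hc => by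
    have hbound := ENNReal.Tendsto.mul_const hinv (.inr (measure_ne_top M A))
    rw [zero_mul] at hbound
    exact tendsto_of_tendsto_of_tendsto_of_le_of_le tendsto_const_nhds (hbound.mono_left h𝓤)
      (fun _ => zero_le) fun n => by gcongr; exact hc n
  have hleft := (hlim _ (hf hA)).add (hsmall (fun _ => m A) fun _ => by simpa using h 0 A)
  have hright := (hlim A hA).add (hsmall (fun n => m.map f^[n + 1] A) fun n => h (n + 1) A)
  simp only [cesaroMean_preimage_add hf _ hA] at hleft
  rw [Measure.map_apply hf hA]
  simpa using tendsto_nhds_unique hleft hright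

lemma ergodic_of_tendsto_measure_preimage_inter [IsProbabilityMeasure m]
    (hf : MeasurePreserving f m m)
    (h : ∀ A, MeasurableSet A →
      Tendsto (fun n : ℕ => m (f^[n] ⁻¹' A ∩ A)) atTop (𝓝 (m A * m A))) : Ergodic f m := by
  refine ⟨hf, ⟨fun {A} hA hinv => ?_⟩⟩
  have hiter : ∀ n, f^[n] ⁻¹' A = A := fun n => by
    rw [preimage_iterate_eq]
    exact Function.iterate_fixed hinv n
  have hlim := h A hA
  simp only [hiter, inter_self] at hlim
  have hmul : m A * 1 = m A * m A := by
    rw [mul_one]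
    exact tendsto_nhds_unique tendsto_const_nhds hlim
  rw [eventuallyConst_set']
  refine (eq_or_ne (m A) 0).imp (fun h0 => ae_eq_empty.2 h0) fun h0 => ?_
  rw [ae_eq_univ, prob_compl_eq_zero_iff hA]
  exact ((ENNReal.mul_right_inj h0 (measure_ne_top m A)).1 hmul).symm

lemma eq_apply_zero_of_periodic_of_gcd_eq_one {X : Type*} {c : ℤ → X} {S : Set ℕ}
    (hS : ∀ d : ℕ, (∀ r ∈ S, d ∣ r) → d = 1) (hc : ∀ r ∈ S, Function.Periodic c r) (j : ℤ) :
    c j = c 0 := by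
  let periods : AddSubgroup ℤ :=
    { carrier := {r | Function.Periodic c r}
      zero_mem' := fun j => by simp
      add_mem' := fun ha hb => ha.add_period hb
      neg_mem' := fun ha => ha.neg }
  obtain ⟨d, hd⟩ := Int.subgroup_cyclic periods
  have hmem : ∀ r, r ∈ periods ↔ d ∣ r := fun r => by
    rw [hd, ← AddSubgroup.zmultiples_eq_closure, Int.mem_zmultiples_iff]
  have hd1 : d.natAbs = 1 := hS _ fun r hr => by
    rw [← Int.natCast_dvd_natCast, Int.natAbs_dvd, ← hmem]
    exact hc r hr
  have hj : Function.Periodic c j := (hmem j).2 (Int.isUnit_iff_natAbs_eq.2 hd1).dvd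
  simpa using hj 0

end Dynamics

section Hilbert

variable {𝕜 E : Type*} [RCLike 𝕜] [NormedAddCommGroup E] [InnerProductSpace 𝕜 E]
  [CompleteSpace E]

open ContinuousLinearMap

lemma exists_tendsto_inner_ultrafilter {ι : Type*} {b : ι → E} {C : ℝ} (hb : ∀ n, ‖b n‖ ≤ C)
    (𝓤 : Ultrafilter ι) :
    ∃ h : E, ∀ v, Tendsto (fun n => inner 𝕜 (b n) v) 𝓤 (𝓝 (inner 𝕜 h v)) := by
  let D := InnerProductSpace.toDual 𝕜 E
  obtain ⟨φ, -, hφ⟩ := (WeakDual.isCompact_closedBall (𝕜 := 𝕜) (E := E) 0 C).ultrafilter_le_nhds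
    (𝓤.map fun n => StrongDual.toWeakDual (D (b n)))
    (le_principal_iff.2 (mem_map.2 (univ_mem' fun n => by simpa [D] using hb n)))
  refine ⟨D.symm (WeakDual.toStrongDual φ), fun v => ?_⟩
  rw [InnerProductSpace.toDual_symm_apply]
  exact ((WeakDual.eval_continuous v).tendsto φ).comp hφ

lemma inner_adjoint_iterate_left (A : E →L[𝕜] E) (n : ℕ) (x y : E) :
    inner 𝕜 ((adjoint A)^[n] x) y = inner 𝕜 x (A^[n] y) := by
  induction n generalizing x y with
  | zero => rfl
  | succ n ih =>
    rw [Function.iterate_succ_apply', adjoint_inner_left, ih, Function.iterate_succ_apply]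

lemma norm_adjoint_isometry_iterate_le (U : E →ₗᵢ[𝕜] E) (n : ℕ) (x : E) :
    ‖(adjoint U.toContinuousLinearMap)^[n] x‖ ≤ ‖x‖ := by
  induction n with
  | zero => rfl
  | succ n ih =>
    have hP : ‖adjoint U.toContinuousLinearMap‖ ≤ 1 :=
      (LinearIsometryEquiv.norm_map _ _).trans_le U.norm_toContinuousLinearMap_le
    rw [Function.iterate_succ_apply']
    simpa using (le_of_opNorm_le _ hP _).trans (mul_le_mul_of_nonneg_left ih zero_le_one)

lemma norm_sub_isometry_adjoint_sq (U : E →ₗᵢ[𝕜] E) (x : E) :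
    ‖x - U (adjoint U.toContinuousLinearMap x)‖ ^ 2 =
      ‖x‖ ^ 2 - ‖adjoint U.toContinuousLinearMap x‖ ^ 2 := by
  have hinner : inner 𝕜 x (U (adjoint U.toContinuousLinearMap x)) =
      inner 𝕜 (adjoint U.toContinuousLinearMap x) (adjoint U.toContinuousLinearMap x) :=
    (adjoint_inner_left U.toContinuousLinearMap _ x).symm
  rw [norm_sub_sq (𝕜 := 𝕜), hinner, inner_self_eq_norm_sq, U.norm_map]
  ring

lemma tendsto_norm_adjoint_iterate_sub (U : E →ₗᵢ[𝕜] E) (g : E) :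
    Tendsto (fun n => ‖(adjoint U.toContinuousLinearMap)^[n] g -
      U ((adjoint U.toContinuousLinearMap)^[n + 1] g)‖) atTop (𝓝 0) := by
  set a : ℕ → E := fun n => (adjoint U.toContinuousLinearMap)^[n] g with ha
  have hdefect : ∀ n, ‖a n - U (a (n + 1))‖ ^ 2 = ‖a n‖ ^ 2 - ‖a (n + 1)‖ ^ 2 := fun n => by
    simp only [ha, Function.iterate_succ_apply', norm_sub_isometry_adjoint_sq]
  have hanti : Antitone fun n => ‖a n‖ ^ 2 := antitone_nat_of_succ_le fun n =>
    sub_nonneg.1 (hdefect n ▸ sq_nonneg _)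
  have hconv := tendsto_atTop_ciInf hanti ⟨0, by rintro _ ⟨n, rfl⟩; positivity⟩
  have hsq : Tendsto (fun n => ‖a n - U (a (n + 1))‖ ^ 2) atTop (𝓝 0) := by
    simpa only [hdefect, sub_self] using hconv.sub ((tendsto_add_atTop_iff_nat 1).2 hconv)
  simpa only [Real.sqrt_sq (norm_nonneg _), Real.sqrt_zero] using hsq.sqrt

lemma tendsto_toNat_natCast_add_atTop (j : ℤ) :
    Tendsto (fun n : ℕ => ((n : ℤ) + j).toNat) atTop atTop :=
  tendsto_atTop_mono (f := fun n : ℕ => n - j.natAbs) (fun n => by omega) (tendsto_sub_atTop_nat _)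

lemma exists_backward_orbit_tendsto_inner (U : E →ₗᵢ[𝕜] E) (g : E) (𝓤 : Ultrafilter ℕ)
    (h𝓤 : (𝓤 : Filter ℕ) ≤ atTop) :
    ∃ h : ℤ → E, (∀ j v, Tendsto (fun n : ℕ => inner 𝕜 g (U^[((n : ℤ) + j).toNat] v)) 𝓤
      (𝓝 (inner 𝕜 (h j) v))) ∧ ∀ j, h j = U (h (j + 1)) := by
  set P : E →L[𝕜] E := adjoint U.toContinuousLinearMap with hP
  have hUP : ∀ x y, inner 𝕜 x (P y) = inner 𝕜 (U x) y := fun x y => adjoint_inner_right _ _ _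
  choose h hlim using fun j : ℤ => exists_tendsto_inner_ultrafilter (𝕜 := 𝕜)
    (b := fun n : ℕ => P^[((n : ℤ) + j).toNat] g)
    (fun n => norm_adjoint_isometry_iterate_le U _ g) 𝓤
  refine ⟨h, fun j v => by simpa [hP, inner_adjoint_iterate_left] using hlim j v,
    fun j => ext_inner_right 𝕜 fun v => ?_⟩
  have hsucc : Tendsto (fun n : ℕ => inner 𝕜 (U (P^[((n : ℤ) + j).toNat + 1] g)) v) 𝓤
      (𝓝 (inner 𝕜 (U (h (j + 1))) v)) := by
    have hPv := hlim (j + 1) (P v)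
    simp only [hUP] at hPv
    refine hPv.congr' (h𝓤 ?_)
    filter_upwards [eventually_ge_atTop j.natAbs] with n hn
    rw [show ((n : ℤ) + (j + 1)).toNat = ((n : ℤ) + j).toNat + 1 by omega]
  have hdiff : Tendsto (fun n : ℕ => inner 𝕜 (P^[((n : ℤ) + j).toNat] g) v -
      inner 𝕜 (U (P^[((n : ℤ) + j).toNat + 1] g)) v) 𝓤 (𝓝 0) := by
    have hnorm := (((tendsto_norm_adjoint_iterate_sub U g).comp
      (tendsto_toNat_natCast_add_atTop j)).mono_left h𝓤).mul_const ‖v‖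
    rw [zero_mul] at hnorm
    refine squeeze_zero_norm (fun n => ?_) hnorm
    rw [← inner_sub_left]
    exact norm_inner_le_norm _ _
  exact sub_eq_zero.1 (tendsto_nhds_unique ((hlim j v).sub hsucc) hdiff)

end Hilbert

section BackwardDensities

variable {α : Type*} [MeasurableSpace α] {ν : Measure α} {F : α → α}

lemma compMeasurePreserving_iterate_indicatorConstLp [IsFiniteMeasure ν]
    (hF : MeasurePreserving F ν ν) (n : ℕ) {A : Set α} (hA : MeasurableSet A) :
    (Lp.compMeasurePreservingₗᵢ ℝ F hF)^[n] (indicatorConstLp 2 hA (measure_ne_top ν A) (1 : ℝ)) =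
      indicatorConstLp 2 (hF.measurable.iterate n hA) (measure_ne_top ν _) (1 : ℝ) := by
  induction n with
  | zero => rfl
  | succ n ih =>
    rw [Function.iterate_succ_apply', ih]
    exact Lp.indicatorConstLp_compMeasurePreserving (hF.measurable.iterate n hA) _ _ hF

lemma exists_backward_densities_real [IsFiniteMeasure ν] (hF : MeasurePreserving F ν ν)
    {B : Set α} (hB : MeasurableSet B) (𝓤 : Ultrafilter ℕ) (h𝓤 : (𝓤 : Filter ℕ) ≤ atTop) :
    ∃ h : ℤ → α → ℝ, (∀ j, Measurable (h j)) ∧ (∀ j, Integrable (h j) ν) ∧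
      (∀ j A, MeasurableSet A →
        Tendsto (fun n : ℕ => ν.real (F^[((n : ℤ) + j).toNat] ⁻¹' A ∩ B)) 𝓤
          (𝓝 (∫ x in A, h j x ∂ν))) ∧
      ∀ j, h j =ᵐ[ν] h (j + 1) ∘ F := by
  obtain ⟨h, hlim, hsucc⟩ := exists_backward_orbit_tendsto_inner
    (Lp.compMeasurePreservingₗᵢ ℝ F hF (E := ℝ) (p := 2))
    (indicatorConstLp 2 hB (measure_ne_top ν B) (1 : ℝ)) 𝓤 h𝓤
  refine ⟨fun j => h j, fun j => (Lp.stronglyMeasurable (h j)).measurable,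
    fun j => (Lp.memLp (h j)).integrable one_le_two, fun j A hA => ?_, fun j => ?_⟩
  · have hlimA := hlim j (indicatorConstLp 2 hA (measure_ne_top ν A) (1 : ℝ))
    rw [real_inner_comm, L2.inner_indicatorConstLp_one] at hlimA
    simpa only [compMeasurePreserving_iterate_indicatorConstLp,
      L2.real_inner_indicatorConstLp_one_indicatorConstLp_one, inter_comm B] using hlimA
  · have hae := Lp.coeFn_compMeasurePreserving (h (j + 1)) hF
    change ⇑(h j) =ᵐ[ν] ⇑(h (j + 1)) ∘ F
    rw [hsucc j]
    exact hae

lemma exists_backward_densities [IsFiniteMeasure ν] (hF : MeasurePreserving F ν ν)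
    {B : Set α} (hB : MeasurableSet B) (𝓤 : Ultrafilter ℕ) (h𝓤 : (𝓤 : Filter ℕ) ≤ atTop) :
    ∃ h : ℤ → α → ℝ≥0∞, (∀ j, Measurable (h j)) ∧
      (∀ j A, MeasurableSet A →
        Tendsto (fun n : ℕ => ν (F^[((n : ℤ) + j).toNat] ⁻¹' A ∩ B)) 𝓤
          (𝓝 (∫⁻ x in A, h j x ∂ν))) ∧
      ∀ j, h j =ᵐ[ν] h (j + 1) ∘ F := by
  obtain ⟨h, hm, hint, hlim, hsucc⟩ := exists_backward_densities_real hF hB 𝓤 h𝓤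
  have hnonneg : ∀ j, 0 ≤ᵐ[ν] h j := fun j =>
    ae_nonneg_of_forall_setIntegral_nonneg (hint j) fun A hA _ =>
      ge_of_tendsto' (hlim j A hA) fun _ => measureReal_nonneg
  refine ⟨fun j x => ENNReal.ofReal (h j x), fun j => (hm j).ennreal_ofReal, fun j A hA => ?_,
    fun j => ?_⟩
  · rw [← ofReal_integral_eq_lintegral_ofReal (hint j).integrableOn (ae_restrict_of_ae (hnonneg j))]
    exact (ENNReal.tendsto_ofReal (hlim j A hA)).congr fun _ => ofReal_measureReal
  · filter_upwards [hsucc j] with x hx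
    exact congrArg ENNReal.ofReal hx

lemma ae_eq_comp_iterate_of_ae_eq_comp {X : Type*} {h : ℤ → α → X}
    (hF : Measure.QuasiMeasurePreserving F ν ν) (hsucc : ∀ j, h j =ᵐ[ν] h (j + 1) ∘ F) (k : ℕ)
    (j : ℤ) : h j =ᵐ[ν] h (j + k) ∘ F^[k] := by
  induction k generalizing j with
  | zero => simp
  | succ k ih =>
    filter_upwards [hsucc j, hF.ae (ih (j + 1))] with x hx hFx
    rw [hx, Function.comp_apply, hFx, Function.comp_apply, Function.comp_apply,
      Function.iterate_succ_apply, Nat.cast_succ, add_right_comm, add_assoc]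

end BackwardDensities

/-! ### Cylinders and separation times -/

section Epow

variable {β : ℝ}

lemma epow_nonneg (hβ : 0 ≤ β) (s : ℕ∞) : 0 ≤ epow β s := by
  unfold epow
  split_ifs <;> positivity

lemma epow_le_pow (hβ : 0 ≤ β) (hβ' : β ≤ 1) {k : ℕ} {s : ℕ∞} (h : (k : ℕ∞) ≤ s) :
    epow β s ≤ β ^ k := by
  unfold epow
  split_ifs with hs
  · positivity
  · lift s to ℕ using hs
    exact pow_le_pow_of_le_one hβ hβ' (by simpa using h)

lemma epow_le_one (hβ : 0 ≤ β) (hβ' : β ≤ 1) (s : ℕ∞) : epow β s ≤ 1 := by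
  simpa using epow_le_pow hβ hβ' (k := 0) (s := s) (by simp)

lemma le_mul_epow_of_forall_le_mul_pow (hβ : 0 ≤ β) (hβ' : β < 1) {a C : ℝ} {s : ℕ∞}
    (h : ∀ k : ℕ, (k : ℕ∞) ≤ s → a ≤ C * β ^ k) : a ≤ C * epow β s := by
  unfold epow
  split_ifs with hs
  · refine ge_of_tendsto' ((tendsto_pow_atTop_nhds_zero_of_lt_one hβ hβ').const_mul C) fun k => ?_
    exact h k (hs ▸ le_top)
  · exact h s.toNat (ENat.natCast_toNat hs).le

end Epow

namespace YoungTower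

variable {Δ₀ : Type*} [MeasurableSpace Δ₀] (T : YoungTower Δ₀)

/-- The cylinder of a word `w` in the index set of the partition: the points whose first
`w.length` iterates under the return map visit the elements `Λ i` prescribed by `w`. -/
def cyl : List T.I → Set Δ₀
  | [] => univ
  | i :: w => T.Λ i ∩ T.FR ⁻¹' cyl w

variable {T}

lemma measurableSet_branch (i : T.I) {A : Set Δ₀} (hA : MeasurableSet A) :
    MeasurableSet (T.Λ i ∩ T.FR ⁻¹' A) :=
  (T.Λ_meas i i.2).inter (T.FR_meas hA)

lemma measurableSet_cyl (w : List T.I) : MeasurableSet (T.cyl w) := by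
  induction w with
  | nil => exact .univ
  | cons i w ih => exact measurableSet_branch i ih

lemma pairwise_disjoint_Λ : Pairwise (Function.onFun Disjoint fun i : T.I => T.Λ i) :=
  fun i j hij => T.Λ_disj i.2 j.2 (Subtype.coe_ne_coe.2 hij)

lemma eq_of_mem_Λ {i j : T.I} {x : Δ₀} (hi : x ∈ T.Λ i) (hj : x ∈ T.Λ j) : i = j := by
  by_contra hij
  exact disjoint_left.1 (pairwise_disjoint_Λ hij) hi hj

lemma isPrefix_of_mem_cyl {v w : List T.I} (h : w.length ≤ v.length) {x : Δ₀}
    (hv : x ∈ T.cyl v) (hw : x ∈ T.cyl w) : w <+: v := by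
  induction w generalizing v x with
  | nil => exact List.nil_prefix
  | cons i w ih =>
    cases v with
    | nil => simp at h
    | cons j v =>
      obtain rfl := eq_of_mem_Λ hw.1 hv.1
      exact List.cons_prefix_cons.2 ⟨rfl, ih (by simpa using h) hv.2 hw.2⟩

lemma cyl_anti {v w : List T.I} (h : w <+: v) : T.cyl v ⊆ T.cyl w := by
  induction w generalizing v with
  | nil => exact subset_univ _
  | cons i w ih =>
    obtain ⟨u, rfl⟩ := h
    exact inter_subset_inter_right _ (preimage_mono (ih (List.prefix_append w u)))

lemma eq_of_mem_cyl {v w : List T.I} (h : v.length = w.length) {x : Δ₀} (hv : x ∈ T.cyl v)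
    (hw : x ∈ T.cyl w) : v = w :=
  ((isPrefix_of_mem_cyl h.ge hv hw).eq_of_length h.symm).symm

lemma cyl_singleton (i : T.I) : T.cyl [i] = T.Λ i := inter_univ _

lemma cyl_append (v w : List T.I) :
    T.cyl (v ++ w) = T.cyl v ∩ T.FR^[v.length] ⁻¹' T.cyl w := by
  induction v with
  | nil => exact (univ_inter _).symm
  | cons i v ih =>
    rw [List.cons_append, cyl, ih, preimage_inter, ← inter_assoc]
    rfl

lemma le_sep_iff {x y : Δ₀} {k : ℕ} : (k : ℕ∞) ≤ T.sep x y ↔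
    ∀ n < k, ∃ i ∈ T.I, T.FR^[n] x ∈ T.Λ i ∧ T.FR^[n] y ∈ T.Λ i := by
  simp only [sep, sepTime, le_iInf_iff, mem_ofPred_eq, Nat.cast_le]
  exact forall_congr' fun n => by rw [← not_lt, not_imp_not]

lemma natCast_le_sep_iff_exists_cyl {x y : Δ₀} {k : ℕ} : (k : ℕ∞) ≤ T.sep x y ↔
    ∃ w : List T.I, w.length = k ∧ x ∈ T.cyl w ∧ y ∈ T.cyl w := by
  rw [le_sep_iff]
  induction k generalizing x y with
  | zero => simpa using ⟨mem_univ x, mem_univ y⟩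
  | succ k ih =>
    constructor
    · intro h
      obtain ⟨i, hi, hx, hy⟩ := h 0 k.succ_pos
      obtain ⟨w, hk, hxw, hyw⟩ := (ih (x := T.FR x) (y := T.FR y)).1
        fun n hn => h (n + 1) (Nat.succ_lt_succ hn)
      exact ⟨⟨i, hi⟩ :: w, congrArg Nat.succ hk, ⟨hx, hxw⟩, hy, hyw⟩
    · rintro ⟨_ | ⟨i, w⟩, hk, hxw, hyw⟩ n hn
      · simp at hk
      cases n with
      | zero => exact ⟨i, i.2, hxw.1, hyw.1⟩
      | succ n =>
        exact (ih (x := T.FR x) (y := T.FR y)).2 ⟨w, by simpa using hk, hxw.2, hyw.2⟩ n (by omega)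

/-! ### Distortion of the reference measure -/

lemma measure_eq_lintegral_jacobian (i : T.I) {A : Set Δ₀} (hA : MeasurableSet A) :
    T.m₀ A = ∫⁻ x in T.Λ i ∩ T.FR ⁻¹' A, ENNReal.ofReal (T.JFR x) ∂T.m₀ := by
  rw [← T.JFR_jac i i.2 _ inter_subset_left (measurableSet_branch i hA), image_inter_preimage,
    (T.FR_bij i i.2).image_eq, univ_inter]

lemma measure_branch_eq_zero_iff (i : T.I) {A : Set Δ₀} (hA : MeasurableSet A) :
    T.m₀ (T.Λ i ∩ T.FR ⁻¹' A) = 0 ↔ T.m₀ A = 0 := by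
  rw [measure_eq_lintegral_jacobian i hA, setLIntegral_eq_zero_iff (measurableSet_branch i hA)
    T.JFR_meas.ennreal_ofReal, measure_eq_zero_iff_ae_notMem]
  refine eventually_congr (.of_forall fun x => ?_)
  refine forall_congr' fun hx => ?_
  simpa using T.JFR_pos i i.2 x hx.1

variable (T) in
lemma nonempty_I : T.I.Nonempty := by
  by_contra! h
  simpa using T.Ret_gcd 0 (by simp [h])

variable (T) in
lemma measure_univ_pos : 0 < T.m₀ univ := by
  obtain ⟨i, hi⟩ := T.nonempty_I
  exact (T.Λ_pos i hi).trans_le (measure_mono (subset_univ _))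

lemma measure_cyl_pos (w : List T.I) : 0 < T.m₀ (T.cyl w) := by
  induction w with
  | nil => exact T.measure_univ_pos
  | cons i w ih =>
    rw [pos_iff_ne_zero, cyl, Ne, measure_branch_eq_zero_iff i (measurableSet_cyl w)]
    exact ih.ne'

lemma jacobian_le (i : T.I) {w : List T.I} {x y : Δ₀} (hx : x ∈ T.Λ i) (hy : y ∈ T.Λ i)
    (hxw : T.FR x ∈ T.cyl w) (hyw : T.FR y ∈ T.cyl w) :
    T.JFR y ≤ Real.exp (T.CF * T.β ^ w.length) * T.JFR x := by
  have hJx := T.JFR_pos i i.2 x hx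
  have hsep : epow T.β (T.sep (T.FR y) (T.FR x)) ≤ T.β ^ w.length :=
    epow_le_pow T.β_pos.le T.β_lt_one.le (natCast_le_sep_iff_exists_cyl.2 ⟨w, rfl, hyw, hxw⟩)
  have hlog : Real.log (T.JFR y / T.JFR x) ≤ T.CF * T.β ^ w.length :=
    (le_abs_self _).trans ((T.distortion i i.2 y hy x hx).trans
      (mul_le_mul_of_nonneg_left hsep T.CF_pos.le))
  rwa [Real.log_le_iff_le_exp (div_pos (T.JFR_pos i i.2 y hy) hJx), div_le_iff₀ hJx] at hlog

lemma measure_branch_mul_le (i : T.I) {w : List T.I} {A B : Set Δ₀} (hA : MeasurableSet A)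
    (hB : MeasurableSet B) (hAw : A ⊆ T.cyl w) (hBw : B ⊆ T.cyl w) :
    T.m₀ (T.Λ i ∩ T.FR ⁻¹' A) * T.m₀ B ≤ ENNReal.ofReal (Real.exp (T.CF * T.β ^ w.length)) *
      (T.m₀ (T.Λ i ∩ T.FR ⁻¹' B) * T.m₀ A) := by
  set A' := T.Λ i ∩ T.FR ⁻¹' A
  set B' := T.Λ i ∩ T.FR ⁻¹' B
  set e := Real.exp (T.CF * T.β ^ w.length)
  have hpoint : ∀ x ∈ A', T.m₀ B ≤ ENNReal.ofReal e * T.m₀ B' * ENNReal.ofReal (T.JFR x) := by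
    intro x hx
    calc T.m₀ B = ∫⁻ y in B', ENNReal.ofReal (T.JFR y) ∂T.m₀ := measure_eq_lintegral_jacobian i hB
      _ ≤ ∫⁻ _ in B', ENNReal.ofReal (e * T.JFR x) ∂T.m₀ :=
          setLIntegral_mono' (measurableSet_branch i hB) fun y hy => ENNReal.ofReal_le_ofReal
            (jacobian_le i hx.1 hy.1 (hAw hx.2) (hBw hy.2))
      _ = _ := by rw [setLIntegral_const, ENNReal.ofReal_mul (Real.exp_pos _).le]; ring
  calc T.m₀ A' * T.m₀ B = ∫⁻ _ in A', T.m₀ B ∂T.m₀ := by rw [setLIntegral_const, mul_comm]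
    _ ≤ ∫⁻ x in A', ENNReal.ofReal e * T.m₀ B' * ENNReal.ofReal (T.JFR x) ∂T.m₀ :=
        setLIntegral_mono' (measurableSet_branch i hA) hpoint
    _ = ENNReal.ofReal e * (T.m₀ B' * T.m₀ A) := by
        rw [lintegral_const_mul _ T.JFR_meas.ennreal_ofReal,
          ← measure_eq_lintegral_jacobian i hA, mul_assoc]

variable (T)

/-! ### Set functions with bounded distortion -/

/-- The constant `K = C_F / (1 - β)`, chosen so that `K β + C_F = K`: pulling back along one branch
of the return map turns distortion `K β ^ (k + 1)` into `K β ^ (k + 1) + C_F β ^ k = K β ^ k`. -/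
def distortionConst : ℝ := T.CF / (1 - T.β)

lemma distortionConst_pos : 0 < T.distortionConst :=
  div_pos T.CF_pos (sub_pos.2 T.β_lt_one)

lemma distortionConst_mul_add : T.distortionConst * T.β + T.CF = T.distortionConst := by
  have := sub_pos.2 T.β_lt_one
  unfold distortionConst
  field_simp
  ring

/-- The bound `exp (K β ^ k)` for the distortion on cylinders of length `k`. -/
def distortionBound (k : ℕ) : ℝ≥0∞ := ENNReal.ofReal (Real.exp (T.distortionConst * T.β ^ k))

lemma distortionBound_ne_top (k : ℕ) : T.distortionBound k ≠ ⊤ := ENNReal.ofReal_ne_top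

lemma one_le_distortionBound (k : ℕ) : 1 ≤ T.distortionBound k := by
  rw [distortionBound, ENNReal.one_le_ofReal, Real.one_le_exp_iff]
  have := T.distortionConst_pos
  have := T.β_pos
  positivity

lemma distortionBound_ne_zero (k : ℕ) : T.distortionBound k ≠ 0 :=
  (zero_lt_one.trans_le (T.one_le_distortionBound k)).ne'

lemma tendsto_distortionBound : Tendsto T.distortionBound atTop (𝓝 1) := by
  have h : Tendsto (fun k => T.distortionConst * T.β ^ k) atTop (𝓝 0) := by
    simpa using (tendsto_pow_atTop_nhds_zero_of_lt_one T.β_pos.le T.β_lt_one).const_mul _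
  unfold distortionBound
  simpa using ENNReal.tendsto_ofReal ((Real.continuous_exp.tendsto 0).comp h)

lemma distortionBound_succ_mul (k : ℕ) :
    T.distortionBound (k + 1) * ENNReal.ofReal (Real.exp (T.CF * T.β ^ k)) =
      T.distortionBound k := by
  rw [distortionBound, distortionBound, ← ENNReal.ofReal_mul (Real.exp_pos _).le, ← Real.exp_add]
  congr 2
  calc T.distortionConst * T.β ^ (k + 1) + T.CF * T.β ^ k
      = (T.distortionConst * T.β + T.CF) * T.β ^ k := by ring
    _ = T.distortionConst * T.β ^ k := by rw [T.distortionConst_mul_add]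

variable {T} in
lemma le_of_forall_le_distortionBound_sq_mul {a b : ℝ≥0∞}
    (h : ∀ k, a ≤ T.distortionBound k ^ 2 * b) : a ≤ b := by
  have hlim : Tendsto (fun k => T.distortionBound k ^ 2 * b) atTop (𝓝 (1 ^ 2 * b)) :=
    ENNReal.Tendsto.mul_const (ENNReal.Tendsto.pow T.tendsto_distortionBound) (.inl (by simp))
  simpa using ge_of_tendsto' hlim h

/-- A set function has bounded distortion if, on measurable subsets of a cylinder of length `k`, its
ratios to `m₀` agree up to the factor `exp (K β ^ k)`. The ratios are cross-multiplied, so that null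
sets need no special treatment; set functions rather than measures are allowed so that countable
sums and setwise limits can be formed before they are known to be measures. -/
def BoundedDistortion (φ : Set Δ₀ → ℝ≥0∞) : Prop :=
  ∀ w A B, MeasurableSet A → MeasurableSet B → A ⊆ T.cyl w → B ⊆ T.cyl w →
    φ A * T.m₀ B ≤ T.distortionBound w.length * (φ B * T.m₀ A)

variable {T}

lemma boundedDistortion_m₀ : T.BoundedDistortion T.m₀ := fun w A B _ _ _ _ => by
  rw [mul_comm (T.m₀ A)]
  exact le_mul_of_one_le_left zero_le (T.one_le_distortionBound _)

namespace BoundedDistortion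

variable {φ : Set Δ₀ → ℝ≥0∞} {μ : Measure Δ₀}

lemma tsum {ι : Type*} {φ : ι → Set Δ₀ → ℝ≥0∞} (h : ∀ i, T.BoundedDistortion (φ i)) :
    T.BoundedDistortion fun A => ∑' i, φ i A := fun w A B hA hB hAw hBw => by
  rw [← ENNReal.tsum_mul_right, ← ENNReal.tsum_mul_right, ← ENNReal.tsum_mul_left]
  exact ENNReal.tsum_le_tsum fun i => h i w A B hA hB hAw hBw

lemma const_mul (h : T.BoundedDistortion φ) (c : ℝ≥0∞) :
    T.BoundedDistortion fun A => c * φ A := fun w A B hA hB hAw hBw => by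
  calc c * φ A * T.m₀ B = c * (φ A * T.m₀ B) := by ring
    _ ≤ c * (T.distortionBound w.length * (φ B * T.m₀ A)) :=
        mul_le_mul_right (h w A B hA hB hAw hBw) c
    _ = T.distortionBound w.length * (c * φ B * T.m₀ A) := by ring

lemma congr {ψ : Set Δ₀ → ℝ≥0∞} (h : T.BoundedDistortion φ)
    (heq : ∀ A, MeasurableSet A → ψ A = φ A) : T.BoundedDistortion ψ :=
  fun w A B hA hB hAw hBw => by
    rw [heq A hA, heq B hB]
    exact h w A B hA hB hAw hBw

lemma of_tendsto {ι : Type*} {l : Filter ι} [l.NeBot] {φ : ι → Set Δ₀ → ℝ≥0∞}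
    {ψ : Set Δ₀ → ℝ≥0∞} (h : ∀ᶠ n in l, T.BoundedDistortion (φ n))
    (hlim : ∀ A, MeasurableSet A → Tendsto (fun n => φ n A) l (𝓝 (ψ A))) :
    T.BoundedDistortion ψ := fun w A B hA hB hAw hBw =>
  le_of_tendsto_of_tendsto
    (ENNReal.Tendsto.mul_const (hlim A hA) (.inr (measure_ne_top _ _)))
    (ENNReal.Tendsto.const_mul (ENNReal.Tendsto.mul_const (hlim B hB)
      (.inr (measure_ne_top _ _))) (.inr (T.distortionBound_ne_top _)))
    (h.mono fun _ hn => hn w A B hA hB hAw hBw)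

lemma branch (h : T.BoundedDistortion φ) (i : T.I) :
    T.BoundedDistortion fun A => φ (T.Λ i ∩ T.FR ⁻¹' A) := fun w A B hA hB hAw hBw => by
  rcases eq_or_ne (T.m₀ B) 0 with hB0 | hB0
  · simp [hB0]
  set A' := T.Λ i ∩ T.FR ⁻¹' A
  set B' := T.Λ i ∩ T.FR ⁻¹' B
  set e := ENNReal.ofReal (Real.exp (T.CF * T.β ^ w.length))
  have hφ : φ A' * T.m₀ B' ≤ T.distortionBound (w.length + 1) * (φ B' * T.m₀ A') :=
    h (i :: w) A' B' (measurableSet_branch i hA) (measurableSet_branch i hB)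
      (inter_subset_inter_right _ (preimage_mono hAw))
      (inter_subset_inter_right _ (preimage_mono hBw))
  have hm₀ : T.m₀ A' * T.m₀ B ≤ e * (T.m₀ B' * T.m₀ A) := measure_branch_mul_le i hA hB hAw hBw
  rw [← ENNReal.mul_le_mul_iff_left ((measure_branch_eq_zero_iff i hB).not.2 hB0)
    (measure_ne_top _ _)]
  calc φ A' * T.m₀ B * T.m₀ B' = φ A' * T.m₀ B' * T.m₀ B := by ring
    _ ≤ T.distortionBound (w.length + 1) * (φ B' * T.m₀ A') * T.m₀ B := by gcongr
    _ = T.distortionBound (w.length + 1) * φ B' * (T.m₀ A' * T.m₀ B) := by ring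
    _ ≤ T.distortionBound (w.length + 1) * φ B' * (e * (T.m₀ B' * T.m₀ A)) := by gcongr
    _ = T.distortionBound (w.length + 1) * e * (φ B' * T.m₀ A) * T.m₀ B' := by ring
    _ = T.distortionBound w.length * (φ B' * T.m₀ A) * T.m₀ B' := by
        rw [T.distortionBound_succ_mul]

lemma mul_univ_le (h : T.BoundedDistortion φ) {A : Set Δ₀} (hA : MeasurableSet A) :
    φ A * T.m₀ univ ≤ T.distortionBound 0 * (φ univ * T.m₀ A) :=
  h [] A univ hA .univ (subset_univ _) (subset_univ _)

lemma univ_mul_le (h : T.BoundedDistortion φ) {A : Set Δ₀} (hA : MeasurableSet A) :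
    φ univ * T.m₀ A ≤ T.distortionBound 0 * (φ A * T.m₀ univ) :=
  h [] univ A .univ hA (subset_univ _) (subset_univ _)

lemma absolutelyContinuous (h : T.BoundedDistortion μ) : μ ≪ T.m₀ :=
  Measure.AbsolutelyContinuous.mk fun A hA hA0 => by
    simpa [hA0, T.measure_univ_pos.ne'] using h.mul_univ_le hA

lemma m₀_absolutelyContinuous (h : T.BoundedDistortion μ) (hμ : μ univ ≠ 0) : T.m₀ ≪ μ :=
  Measure.AbsolutelyContinuous.mk fun A hA hA0 => by
    simpa [hA0, hμ] using h.univ_mul_le hA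

end BoundedDistortion

/-! ### Countable decompositions into cylinders -/

variable (T) in
lemma ae_exists_mem_Λ : ∀ᵐ x ∂T.m₀, ∃ i : T.I, x ∈ T.Λ i := by
  rw [ae_iff]
  refine measure_mono_null (fun x hx => ?_) T.Λ_full
  simpa using hx

lemma measure_eq_tsum_Λ {μ : Measure Δ₀} (h : μ ≪ T.m₀) (A : Set Δ₀) :
    μ A = ∑' i : T.I, μ (T.Λ i ∩ A) :=
  measure_eq_tsum_inter_of_ae_mem (fun i : T.I => T.Λ_meas i i.2) pairwise_disjoint_Λ
    (Eventually.filter_mono h.ae_le T.ae_exists_mem_Λ) A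

lemma BoundedDistortion.map {μ : Measure Δ₀} (h : T.BoundedDistortion μ) :
    T.BoundedDistortion (μ.map T.FR) :=
  (tsum h.branch).congr fun A hA => by
    rw [Measure.map_apply T.FR_meas hA, measure_eq_tsum_Λ h.absolutelyContinuous]

variable (T) in
lemma quasiMeasurePreserving_FR : Measure.QuasiMeasurePreserving T.FR T.m₀ T.m₀ :=
  ⟨T.FR_meas, boundedDistortion_m₀.map.absolutelyContinuous⟩

variable (T) in
lemma ae_exists_mem_cyl (k : ℕ) :
    ∀ᵐ x ∂T.m₀, ∃ w : {w : List T.I // w.length = k}, x ∈ T.cyl w := by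
  induction k with
  | zero => exact .of_forall fun x => ⟨⟨[], rfl⟩, mem_univ x⟩
  | succ k ih =>
    filter_upwards [T.quasiMeasurePreserving_FR.ae ih, T.ae_exists_mem_Λ]
    rintro x ⟨⟨w, hw⟩, hxw⟩ ⟨i, hxi⟩
    exact ⟨⟨i :: w, congrArg Nat.succ hw⟩, hxi, hxw⟩

lemma measure_eq_tsum_cyl {μ : Measure Δ₀} (h : μ ≪ T.m₀) (k : ℕ) (A : Set Δ₀) :
    μ A = ∑' w : {w : List T.I // w.length = k}, μ (T.cyl w ∩ A) := by
  refine measure_eq_tsum_inter_of_ae_mem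
    (fun w : {w : List T.I // w.length = k} => measurableSet_cyl w.1) (fun v w hvw => ?_)
    (Eventually.filter_mono h.ae_le (T.ae_exists_mem_cyl k)) A
  exact disjoint_left.2 fun x hxv hxw =>
    hvw (Subtype.ext (eq_of_mem_cyl (v.2.trans w.2.symm) hxv hxw))

lemma measure_le_of_forall_cyl {μ μ' : Measure Δ₀} (h : μ ≪ T.m₀) (h' : μ' ≪ T.m₀)
    (hle : ∀ w A, MeasurableSet A → A ⊆ T.cyl w → μ A ≤ T.distortionBound w.length ^ 2 * μ' A) :
    μ ≤ μ' := by
  refine Measure.le_iff.2 fun A hA => le_of_forall_le_distortionBound_sq_mul (T := T) fun k => ?_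
  rw [measure_eq_tsum_cyl h k, measure_eq_tsum_cyl h' k, ← ENNReal.tsum_mul_left]
  refine ENNReal.tsum_le_tsum ?_
  rintro ⟨w, rfl⟩
  exact hle w _ ((measurableSet_cyl w).inter hA) inter_subset_left

/-! ### The invariant measure of the return map -/

lemma boundedDistortion_map_iterate (n : ℕ) : T.BoundedDistortion (T.m₀.map T.FR^[n]) := by
  induction n with
  | zero => simpa using boundedDistortion_m₀
  | succ n ih =>
    rw [Function.iterate_succ', ← Measure.map_map T.FR_meas (T.FR_meas.iterate n)]
    exact ih.map

lemma boundedDistortion_cesaroMean (n : ℕ) :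
    T.BoundedDistortion (cesaroMean T.FR T.m₀ n) :=
  ((BoundedDistortion.tsum fun k : Finset.range (n + 1) =>
    boundedDistortion_map_iterate (k : ℕ)).const_mul ((n : ℝ≥0∞) + 1)⁻¹).congr fun A _ => by
      rw [cesaroMean_apply, ← Finset.tsum_subtype]

lemma BoundedDistortion.le_smul_m₀ {μ : Measure Δ₀} (h : T.BoundedDistortion μ)
    (hμ : μ univ = T.m₀ univ) : μ ≤ T.distortionBound 0 • T.m₀ := by
  refine Measure.le_iff.2 fun A hA => ?_
  have hle := h.mul_univ_le hA
  rw [hμ, mul_left_comm, mul_comm (T.m₀ univ)] at hle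
  rwa [ENNReal.mul_le_mul_iff_left T.measure_univ_pos.ne' (measure_ne_top _ _)] at hle

lemma map_iterate_le (n : ℕ) : T.m₀.map T.FR^[n] ≤ T.distortionBound 0 • T.m₀ :=
  (boundedDistortion_map_iterate n).le_smul_m₀ <| by
    rw [Measure.map_apply (T.FR_meas.iterate n) .univ, preimage_univ]

variable (T) in
lemma exists_invariant_boundedDistortion : ∃ η : Measure Δ₀,
    η univ = T.m₀ univ ∧ T.BoundedDistortion η ∧ MeasurePreserving T.FR η η := by
  have : IsFiniteMeasure (T.distortionBound 0 • T.m₀) :=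
    Measure.smul_finite _ (T.distortionBound_ne_top 0)
  obtain ⟨η, hη, hlim⟩ := exists_measurePreserving_tendsto_cesaroMean T.FR_meas map_iterate_le
    (Ultrafilter.of atTop) (Ultrafilter.of_le atTop)
  refine ⟨η, ?_, .of_tendsto (.of_forall boundedDistortion_cesaroMean) hlim, hη⟩
  refine tendsto_nhds_unique (hlim _ .univ) ?_
  simp only [cesaroMean_univ T.FR_meas, tendsto_const_nhds]

/-! ### Pointwise densities -/

variable (T) in
/-- A version of the density `dη/dm₀` of a measure of bounded distortion which is regular at every
point, as membership in `F_β⁺` requires: the best of the upper bounds given by the cylinders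
around `x`. -/
def regDensity (η : Measure Δ₀) (x : Δ₀) : ℝ≥0∞ :=
  ⨅ (w : List T.I) (_ : x ∈ T.cyl w),
    T.distortionBound w.length * (η (T.cyl w) / T.m₀ (T.cyl w))

lemma measurable_regDensity (η : Measure Δ₀) : Measurable (T.regDensity η) := by
  classical
  refine .iInf fun w => ?_
  simp only [iInf_eq_if]
  exact .ite (measurableSet_cyl w) measurable_const measurable_const

lemma regDensity_ne_top (η : Measure Δ₀) [IsFiniteMeasure η] (x : Δ₀) : T.regDensity η x ≠ ⊤ :=
  ne_top_of_le_ne_top (ENNReal.mul_ne_top (T.distortionBound_ne_top 0)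
    (ENNReal.div_ne_top (measure_ne_top η univ) T.measure_univ_pos.ne'))
    (iInf₂_le [] (mem_univ x))

namespace BoundedDistortion

variable {η : Measure Δ₀}

lemma measure_le_mul_div (h : T.BoundedDistortion η) {v w : List T.I} {x : Δ₀} (hv : x ∈ T.cyl v)
    (hw : x ∈ T.cyl w) {A : Set Δ₀} (hA : MeasurableSet A) (hAw : A ⊆ T.cyl w) :
    η A ≤ T.distortionBound w.length *
      (T.distortionBound v.length * (η (T.cyl v) / T.m₀ (T.cyl v)) * T.m₀ A) := by
  have hle : ∀ u : List T.I, A ⊆ T.cyl u → T.cyl v ⊆ T.cyl u →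
      η A ≤ T.distortionBound u.length * (η (T.cyl v) / T.m₀ (T.cyl v) * T.m₀ A) := by
    intro u hAu hvu
    have hu := h u A (T.cyl v) hA (measurableSet_cyl v) hAu hvu
    rw [← ENNReal.le_div_iff_mul_le (.inl (measure_cyl_pos v).ne') (.inl (measure_ne_top _ _))]
      at hu
    exact hu.trans_eq (by simp only [div_eq_mul_inv]; ring)
  rw [mul_assoc]
  rcases le_total w.length v.length with hlen | hlen
  · refine (hle w hAw (cyl_anti (isPrefix_of_mem_cyl hlen hv hw))).trans ?_
    exact mul_le_mul_right (le_mul_of_one_le_left zero_le (T.one_le_distortionBound _)) _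
  · refine (hle v (hAw.trans (cyl_anti (isPrefix_of_mem_cyl hlen hw hv))) subset_rfl).trans ?_
    exact le_mul_of_one_le_left zero_le (T.one_le_distortionBound _)

lemma measure_le_regDensity_mul (h : T.BoundedDistortion η) {w : List T.I} {x : Δ₀}
    (hx : x ∈ T.cyl w) {A : Set Δ₀} (hA : MeasurableSet A) (hAw : A ⊆ T.cyl w) :
    η A ≤ T.distortionBound w.length * T.regDensity η x * T.m₀ A := by
  rcases eq_or_ne (T.m₀ A) 0 with hA0 | hA0
  · simp [h.absolutelyContinuous hA0]
  have hinf : η A / T.m₀ A / T.distortionBound w.length ≤ T.regDensity η x := by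
    refine le_iInf₂ fun v hv => ENNReal.div_le_of_le_mul' (ENNReal.div_le_of_le_mul ?_)
    rw [mul_assoc]
    exact h.measure_le_mul_div hv hx hA hAw
  rwa [ENNReal.div_le_iff_le_mul (.inl (T.distortionBound_ne_zero _))
    (.inl (T.distortionBound_ne_top _)), mul_comm (T.regDensity η x),
    ENNReal.div_le_iff_le_mul (.inl hA0) (.inl (measure_ne_top _ _))] at hinf

lemma regDensity_mul_le_measure (h : T.BoundedDistortion η) {w : List T.I} {x : Δ₀}
    (hx : x ∈ T.cyl w) {A : Set Δ₀} (hA : MeasurableSet A) (hAw : A ⊆ T.cyl w) :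
    T.regDensity η x * T.m₀ A ≤ T.distortionBound w.length ^ 2 * η A := by
  have hw := h w (T.cyl w) A (measurableSet_cyl w) hA subset_rfl hAw
  rw [← mul_assoc, ← ENNReal.div_le_iff_le_mul (.inl (measure_cyl_pos w).ne')
    (.inl (measure_ne_top _ _))] at hw
  calc T.regDensity η x * T.m₀ A
      ≤ T.distortionBound w.length * (η (T.cyl w) / T.m₀ (T.cyl w)) * T.m₀ A := by
        gcongr
        exact iInf₂_le w hx
    _ = T.distortionBound w.length * (η (T.cyl w) * T.m₀ A / T.m₀ (T.cyl w)) := by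
        simp only [div_eq_mul_inv]; ring
    _ ≤ T.distortionBound w.length * (T.distortionBound w.length * η A) := by gcongr
    _ = T.distortionBound w.length ^ 2 * η A := by ring

lemma regDensity_le_mul_regDensity (h : T.BoundedDistortion η) {w : List T.I} {x y : Δ₀}
    (hx : x ∈ T.cyl w) (hy : y ∈ T.cyl w) :
    T.regDensity η x ≤ T.distortionBound w.length ^ 2 * T.regDensity η y :=
  calc T.regDensity η x ≤ T.distortionBound w.length * (η (T.cyl w) / T.m₀ (T.cyl w)) :=
        iInf₂_le w hx
    _ ≤ T.distortionBound w.length * (T.distortionBound w.length * T.regDensity η y) := by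
        gcongr
        exact ENNReal.div_le_of_le_mul
          (h.measure_le_regDensity_mul hy (measurableSet_cyl w) subset_rfl)
    _ = T.distortionBound w.length ^ 2 * T.regDensity η y := by ring

lemma withDensity_regDensity (h : T.BoundedDistortion η) :
    T.m₀.withDensity (T.regDensity η) = η := by
  have hac : T.m₀.withDensity (T.regDensity η) ≪ T.m₀ := withDensity_absolutelyContinuous _ _
  refine le_antisymm (measure_le_of_forall_cyl hac h.absolutelyContinuous fun w A hA hAw => ?_)
    (measure_le_of_forall_cyl h.absolutelyContinuous hac fun w A hA hAw => ?_)
  · rw [withDensity_apply _ hA]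
    exact setLIntegral_le_of_forall_mul_le hA (measure_ne_top _ _) fun x hx =>
      h.regDensity_mul_le_measure (hAw hx) hA hAw
  · rcases eq_or_ne (T.m₀ A) 0 with hA0 | hA0
    · simp [h.absolutelyContinuous hA0]
    rw [withDensity_apply _ hA, ← lintegral_const_mul _ (measurable_regDensity η)]
    refine le_setLIntegral_of_forall_le_mul hA hA0 (measure_ne_top _ _) fun x hx => ?_
    refine (h.measure_le_regDensity_mul (hAw hx) hA hAw).trans ?_
    gcongr
    exact le_self_pow (T.one_le_distortionBound _) two_ne_zero

lemma regDensity_ne_zero (h : T.BoundedDistortion η) (hη : η univ ≠ 0) (x : Δ₀) :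
    T.regDensity η x ≠ 0 := fun hx => hη <| by
  simpa [hx] using
    h.measure_le_regDensity_mul (w := []) (mem_univ x) .univ (subset_univ _)

end BoundedDistortion

/-! ### Densities in `F_β⁺` -/

variable (T) in
/-- Positive functions on the base with log-Hölder oscillation: ratios of values on a cylinder of
length `k` are at most `exp (K β ^ k)`. -/
structure LogHolder (K : ℝ) (g : Δ₀ → ℝ) : Prop where
  pos : ∀ x, 0 < g x
  le_exp_mul : ∀ w, ∀ x ∈ T.cyl w, ∀ y ∈ T.cyl w, g x ≤ Real.exp (K * T.β ^ w.length) * g y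

lemma BoundedDistortion.logHolder_toReal_regDensity {η : Measure Δ₀} [IsFiniteMeasure η]
    (h : T.BoundedDistortion η) (hη : η univ ≠ 0) :
    T.LogHolder (2 * T.distortionConst) fun x => (T.regDensity η x).toReal where
  pos x := ENNReal.toReal_pos (h.regDensity_ne_zero hη x) (regDensity_ne_top η x)
  le_exp_mul w x hx y hy := by
    have hle := ENNReal.toReal_mono (ENNReal.mul_ne_top
      (ENNReal.pow_ne_top (T.distortionBound_ne_top _)) (regDensity_ne_top η y))
      (h.regDensity_le_mul_regDensity hx hy)
    rwa [ENNReal.toReal_mul, ENNReal.toReal_pow, distortionBound,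
      ENNReal.toReal_ofReal (Real.exp_pos _).le, ← Real.exp_nat_mul, ← mul_assoc,
      Nat.cast_ofNat] at hle

end YoungTower

lemma abs_sub_one_le_mul_exp {t u : ℝ} (hu : 0 ≤ u) (h : t ≤ Real.exp u)
    (h' : 1 ≤ Real.exp u * t) : |t - 1| ≤ u * Real.exp u := by
  have hexp : Real.exp u ≤ 1 + u * Real.exp u := by
    have := mul_le_mul_of_nonneg_left (Real.add_one_le_exp (-u)) (Real.exp_pos u).le
    rw [← Real.exp_add, add_neg_cancel, Real.exp_zero] at this
    linarith
  have hone : 1 ≤ Real.exp u := Real.one_le_exp hu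
  rw [abs_le]
  constructor <;> nlinarith

namespace YoungTower.LogHolder

variable {Δ₀ : Type*} [MeasurableSpace Δ₀] {T : YoungTower Δ₀} {K : ℝ} {g : Δ₀ → ℝ}

lemma le_exp_mul_of_base (h : T.LogHolder K g) (x y : Δ₀) : g x ≤ Real.exp K * g y := by
  simpa using h.le_exp_mul [] x (mem_univ x) y (mem_univ y)

lemma exists_pos_le (h : T.LogHolder K g) : ∃ c, 0 < c ∧ ∀ x, c ≤ g x := by
  obtain ⟨x₀, -⟩ := nonempty_of_measure_ne_zero T.measure_univ_pos.ne'
  exact ⟨g x₀ / Real.exp K, div_pos (h.pos x₀) (Real.exp_pos K),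
    fun x => (div_le_iff₀' (Real.exp_pos K)).2 (h.le_exp_mul_of_base x₀ x)⟩

lemma abs_div_sub_one_le (h : T.LogHolder K g) (hK : 0 ≤ K) (x y : Δ₀) :
    |g x / g y - 1| ≤ K * Real.exp K * epow T.β (T.sep x y) := by
  refine le_mul_epow_of_forall_le_mul_pow T.β_pos.le T.β_lt_one fun k hk => ?_
  obtain ⟨w, rfl, hx, hy⟩ := natCast_le_sep_iff_exists_cyl.1 hk
  have hu : 0 ≤ K * T.β ^ w.length := mul_nonneg hK (pow_pos T.β_pos _).le
  have hinv : 1 ≤ Real.exp (K * T.β ^ w.length) * (g x / g y) := by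
    rw [← mul_div_assoc, one_le_div (h.pos y)]
    exact h.le_exp_mul w y hy x hx
  calc |g x / g y - 1| ≤ K * T.β ^ w.length * Real.exp (K * T.β ^ w.length) :=
        abs_sub_one_le_mul_exp hu ((div_le_iff₀ (h.pos y)).2 (h.le_exp_mul w x hx y hy)) hinv
    _ ≤ K * T.β ^ w.length * Real.exp K := by
        gcongr
        exact mul_le_of_le_one_right hK (pow_le_one₀ T.β_pos.le T.β_lt_one.le)
    _ = K * Real.exp K * T.β ^ w.length := by ring

lemma exists_abs_sub_le (h : T.LogHolder K g) (hK : 0 ≤ K) :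
    ∃ C, ∀ x y, |g x - g y| ≤ C * epow T.β (T.sep x y) ∧ |g x - g y| ≤ C := by
  obtain ⟨x₀, -⟩ := nonempty_of_measure_ne_zero T.measure_univ_pos.ne'
  set b := Real.exp K * g x₀
  set C := b * (K * Real.exp K)
  have hb : 0 ≤ b := mul_nonneg (Real.exp_pos K).le (h.pos x₀).le
  have hC : 0 ≤ C := mul_nonneg hb (mul_nonneg hK (Real.exp_pos K).le)
  have hle : ∀ x y, |g x - g y| ≤ C * epow T.β (T.sep x y) := fun x y =>
    calc |g x - g y| = g y * |g x / g y - 1| := by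
          rw [← abs_of_pos (h.pos y), ← abs_mul, abs_of_pos (h.pos y), mul_sub, mul_one,
            mul_div_cancel₀ _ (h.pos y).ne']
      _ ≤ b * (K * Real.exp K * epow T.β (T.sep x y)) :=
          mul_le_mul (h.le_exp_mul_of_base y x₀) (h.abs_div_sub_one_le hK x y) (abs_nonneg _) hb
      _ = C * epow T.β (T.sep x y) := by ring
  exact ⟨C, fun x y => ⟨hle x y, (hle x y).trans
    (mul_le_of_le_one_right hC (epow_le_one T.β_pos.le T.β_lt_one.le _))⟩⟩

lemma memFplus (h : T.LogHolder K g) (hK : 0 < K) : T.memFplus fun p => g p.1.1 := by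
  obtain ⟨C, hC⟩ := h.exists_abs_sub_le hK.le
  refine ⟨⟨max C 1, by simp, fun p q => ?_⟩, K * Real.exp K, by positivity,
    fun l i hi => .inr ⟨fun p _ => h.pos _, fun p hp q hq => ?_⟩⟩
  · have hβ := epow_nonneg T.β_pos.le (T.sepTower p q)
    refine le_trans ?_ (mul_le_mul_of_nonneg_right (le_max_left C 1) hβ)
    unfold sepTower
    split_ifs
    · exact (hC _ _).1
    · simpa [epow] using (hC _ _).2
  · have hs : T.samePiece p q := ⟨l, i, hi, hp, hq⟩
    rw [sepTower, if_pos hs]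
    exact h.abs_div_sub_one_le hK.le _ _

end YoungTower.LogHolder

namespace YoungTower

variable {Δ₀ : Type*} [MeasurableSpace Δ₀] {T : YoungTower Δ₀}

/-! ### Lifting measures to the tower -/

variable (T) in
/-- The inclusion `x ↦ (x, l)` of the base into the `l`-th level of the tower. It is total: points
above which there is no `l`-th level are sent to the base. -/
def level (l : ℕ) (x : Δ₀) : T.Tower :=
  if h : l < T.R x then ⟨(x, l), h⟩ else ⟨(x, 0), T.R_pos x⟩

lemma level_of_lt {l : ℕ} {x : Δ₀} (h : l < T.R x) : T.level l x = ⟨(x, l), h⟩ := dif_pos h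

lemma fst_level (l : ℕ) (x : Δ₀) : (T.level l x).1.1 = x := by
  unfold level
  split_ifs <;> rfl

variable (T) in
lemma measurableSet_lt_R (l : ℕ) : MeasurableSet {x | l < T.R x} :=
  measurableSet_lt measurable_const T.R_meas

lemma measurable_level (l : ℕ) : Measurable (T.level l) :=
  Measurable.dite (s := {x | l < T.R x}) (f := fun x => (⟨(x, l), x.2⟩ : T.Tower))
    (g := fun x => ⟨(x, 0), T.R_pos x⟩) (by fun_prop) (by fun_prop) (T.measurableSet_lt_R l)

variable (T) in
/-- The part of the base lying below the intersection of a subset of the tower with the `l`-th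
level. -/
def slice (l : ℕ) (A : Set T.Tower) : Set Δ₀ := T.level l ⁻¹' A ∩ {x | l < T.R x}

lemma measurableSet_slice (l : ℕ) {A : Set T.Tower} (hA : MeasurableSet A) :
    MeasurableSet (T.slice l A) :=
  (measurable_level l hA).inter (T.measurableSet_lt_R l)

lemma slice_zero (A : Set T.Tower) : T.slice 0 A = T.level 0 ⁻¹' A :=
  inter_eq_left.2 fun x _ => T.R_pos x

variable (T) in
/-- The measure on the tower which on each level is a copy of `μ`. -/
def lift (μ : Measure Δ₀) : Measure T.Tower :=
  Measure.sum fun l => (μ.restrict {x | l < T.R x}).map (T.level l)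

lemma lift_apply (μ : Measure Δ₀) {A : Set T.Tower} (hA : MeasurableSet A) :
    T.lift μ A = ∑' l, μ (T.slice l A) := by
  rw [lift, Measure.sum_apply _ hA]
  refine tsum_congr fun l => ?_
  rw [Measure.map_apply (measurable_level l) hA,
    Measure.restrict_apply (measurable_level l hA), slice]

variable (T) in
lemma towerMeasure_eq_lift : T.towerMeasure = T.lift T.m₀ := by
  have hemb : MeasurableEmbedding (Subtype.val : T.Tower → Δ₀ × ℕ) :=
    .subtype_coe (measurableSet_lt measurable_snd (T.R_meas.comp measurable_fst))
  have hmap : ∀ l, ((T.m₀.restrict {x | l < T.R x}).map (T.level l)).map Subtype.val =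
      (T.m₀.restrict {x | l < T.R x}).map fun x => (x, l) := fun l => by
    rw [Measure.map_map measurable_subtype_coe (measurable_level l)]
    refine Measure.map_congr ((ae_restrict_mem (T.measurableSet_lt_R l)).mono fun x hx => ?_)
    simp only [Function.comp_apply, level_of_lt hx]
  rw [towerMeasure, ← hemb.comap_map (T.lift T.m₀), lift,
    Measure.map_sum measurable_subtype_coe.aemeasurable]
  simp only [hmap]

lemma lift_withDensity (μ : Measure Δ₀) {g : Δ₀ → ℝ≥0∞} (hg : Measurable g) :
    T.lift (μ.withDensity g) = (T.lift μ).withDensity fun p => g p.1.1 := by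
  simp only [lift, withDensity_sum, restrict_withDensity (T.measurableSet_lt_R _)]
  congr 1 with l : 1
  rw [← map_withDensity_comp (measurable_level l) (by fun_prop)]
  simp only [Function.comp_def, fst_level]

lemma lift_absolutelyContinuous {μ μ' : Measure Δ₀} (h : μ ≪ μ') : T.lift μ ≪ T.lift μ' := by
  refine Measure.AbsolutelyContinuous.mk fun A hA h0 => ?_
  rw [lift_apply _ hA, ENNReal.tsum_eq_zero] at h0 ⊢
  exact fun l => h (h0 l)

lemma lift_univ (μ : Measure Δ₀) : T.lift μ univ = ∫⁻ x, (T.R x : ℝ≥0∞) ∂μ := by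
  have hR : ∀ x, (T.R x : ℝ≥0∞) = ∑' l, {x | l < T.R x}.indicator 1 x := fun x => by
    rw [tsum_eq_sum (s := Finset.range (T.R x)) fun l hl => by simpa using hl,
      Finset.sum_congr rfl (g := 1) fun l hl => by simp [Finset.mem_range.1 hl]]
    simp
  simp only [hR]
  rw [lift_apply _ .univ,
    lintegral_tsum fun l => (measurable_one.indicator (T.measurableSet_lt_R l)).aemeasurable]
  exact tsum_congr fun l => by
    rw [lintegral_indicator_one (T.measurableSet_lt_R l), slice, preimage_univ, univ_inter]

lemma ae_lift_iff {μ : Measure Δ₀} {P : T.Tower → Prop} (hP : MeasurableSet {p | P p}) :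
    (∀ᵐ p ∂T.lift μ, P p) ↔ ∀ l, ∀ᵐ x ∂μ, l < T.R x → P (T.level l x) := by
  simp only [lift, Measure.ae_sum_iff, ae_map_iff (measurable_level _).aemeasurable hP,
    ae_restrict_iff' (T.measurableSet_lt_R _), mem_ofPred_eq]

lemma quasiMeasurePreserving_fst (μ : Measure Δ₀) :
    Measure.QuasiMeasurePreserving (fun p : T.Tower => p.1.1) (T.lift μ) μ := by
  refine ⟨by fun_prop, .mk fun A hA h0 => ?_⟩
  rw [Measure.map_apply (by fun_prop) hA, lift_apply _ (by measurability), ENNReal.tsum_eq_zero]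
  refine fun l => measure_mono_null (fun x hx => ?_) h0
  simpa only [mem_preimage, fst_level] using hx.1

/-! ### Invariant measures of the tower map -/

variable (T) in
lemma measurable_towerMap : Measurable T.towerMap :=
  Measurable.dite (s := {p : T.Tower | p.1.2 + 1 < T.R p.1.1})
    (f := fun p => (⟨(p.1.1.1, p.1.1.2 + 1), p.2⟩ : T.Tower))
    (g := fun p => ⟨(T.FR p.1.1.1, 0), T.R_pos _⟩)
    (by fun_prop) ((T.FR_meas.comp (by fun_prop)).prodMk measurable_const).subtype_mk
    (measurableSet_lt (by fun_prop) (T.R_meas.comp (by fun_prop)))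

lemma towerMap_level_of_lt {l : ℕ} {x : Δ₀} (h : l + 1 < T.R x) :
    T.towerMap (T.level l x) = T.level (l + 1) x := by
  rw [level_of_lt (by lia), level_of_lt h, towerMap, dif_pos h]

lemma towerMap_level_of_eq {l : ℕ} {x : Δ₀} (h : T.R x = l + 1) :
    T.towerMap (T.level l x) = T.level 0 (T.FR x) := by
  rw [level_of_lt (by lia), level_of_lt (T.R_pos _), towerMap, dif_neg h.not_gt]

lemma slice_preimage_towerMap (l : ℕ) (A : Set T.Tower) : T.slice l (T.towerMap ⁻¹' A) =
    T.slice (l + 1) A ∪ (T.R ⁻¹' {l + 1} ∩ T.FR ⁻¹' T.slice 0 A) := by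
  ext x
  rw [slice_zero]
  simp only [slice, mem_union, mem_inter_iff, mem_preimage, mem_ofPred_eq, mem_singleton_iff]
  rcases lt_trichotomy (T.R x) (l + 1) with h | h | h
  · simp [h.ne, h.not_gt, show ¬ l < T.R x by lia]
  · simp [towerMap_level_of_eq h, h]
  · simp [towerMap_level_of_lt h, h.ne', h, show l < T.R x by lia]

lemma measure_eq_tsum_return (μ : Measure Δ₀) (A : Set Δ₀) :
    μ A = ∑' l, μ (T.R ⁻¹' {l + 1} ∩ A) := by
  refine measure_eq_tsum_inter_of_ae_mem (fun l => T.R_meas (measurableSet_singleton (l + 1)))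
    (fun k l hkl => disjoint_left.2 fun x hk hl => hkl ?_) (.of_forall fun x => ?_) A
  · simpa using hk.symm.trans hl
  · exact ⟨T.R x - 1, (Nat.sub_add_cancel (T.R_pos x)).symm⟩

lemma measurePreserving_towerMap {η : Measure Δ₀} (h : MeasurePreserving T.FR η η) :
    MeasurePreserving T.towerMap (T.lift η) (T.lift η) := by
  refine ⟨T.measurable_towerMap, Measure.ext fun A hA => ?_⟩
  have hF : MeasurableSet (T.FR ⁻¹' T.slice 0 A) := T.FR_meas (measurableSet_slice 0 hA)
  have hstep : ∀ l, η (T.slice l (T.towerMap ⁻¹' A)) =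
      η (T.slice (l + 1) A) + η (T.R ⁻¹' {l + 1} ∩ T.FR ⁻¹' T.slice 0 A) := fun l => by
    rw [slice_preimage_towerMap,
      measure_union _ ((T.R_meas (measurableSet_singleton (l + 1))).inter hF)]
    exact disjoint_left.2 fun x hx hx' => hx.2.ne' hx'.1
  rw [Measure.map_apply T.measurable_towerMap hA, lift_apply _ (T.measurable_towerMap hA)]
  simp only [hstep]
  rw [ENNReal.tsum_add, ← measure_eq_tsum_return,
    h.measure_preimage (measurableSet_slice 0 hA).nullMeasurableSet, lift_apply _ hA,
    tsum_eq_zero_add' (f := fun l => η (T.slice l A)) ENNReal.summable, add_comm]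

lemma exists_invariant_boundedDistortion_lift_univ_eq_one
    (hR : Integrable (fun x => (T.R x : ℝ)) T.m₀) : ∃ η : Measure Δ₀, IsFiniteMeasure η ∧
      η univ ≠ 0 ∧ T.BoundedDistortion η ∧ MeasurePreserving T.FR η η ∧ T.lift η univ = 1 := by
  obtain ⟨η, hu, hreg, hη⟩ := T.exists_invariant_boundedDistortion
  have hu0 : η univ ≠ 0 := hu.trans_ne T.measure_univ_pos.ne'
  have hfin : T.lift η univ ≠ ⊤ := by
    have hR' := hR.lintegral_lt_top.ne
    simp only [ENNReal.ofReal_natCast] at hR'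
    rw [lift_univ]
    refine ne_top_of_le_ne_top ?_ (lintegral_mono' (hreg.le_smul_m₀ hu) le_rfl)
    rw [lintegral_smul_measure]
    exact ENNReal.mul_ne_top (T.distortionBound_ne_top 0) hR'
  have hpos : T.lift η univ ≠ 0 := by
    refine (hu0.bot_lt.trans_le ?_).ne'
    rw [lift_univ, ← lintegral_one]
    exact lintegral_mono fun x => Nat.one_le_cast.2 (T.R_pos x)
  refine ⟨(T.lift η univ)⁻¹ • η, ⟨?_⟩, ?_, hreg.const_mul _, hη.smul_measure _, ?_⟩
  · rw [Measure.smul_apply, hu]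
    exact ENNReal.mul_lt_top (ENNReal.inv_lt_top.2 hpos.bot_lt) (measure_lt_top _ _)
  · exact mul_ne_zero (ENNReal.inv_ne_zero.2 hfin) hu0
  · rw [lift_univ, lintegral_smul_measure, ← lift_univ]
    exact ENNReal.inv_mul_cancel hpos hfin

lemma BoundedDistortion.exists_density_lift {η : Measure Δ₀} [IsFiniteMeasure η]
    (h : T.BoundedDistortion η) (hη : η univ ≠ 0) : ∃ ρ : T.Tower → ℝ, Measurable ρ ∧
      T.lift η = T.towerMeasure.withDensity (fun p => ENNReal.ofReal (ρ p)) ∧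
      T.memFplus ρ ∧ ∃ c : ℝ, 0 < c ∧ ∀ p, c ≤ ρ p := by
  have hlog := h.logHolder_toReal_regDensity hη
  obtain ⟨c, hc, hle⟩ := hlog.exists_pos_le
  refine ⟨fun p => (T.regDensity η p.1.1).toReal,
    ((measurable_regDensity η).comp (by fun_prop)).ennreal_toReal, ?_,
    hlog.memFplus (mul_pos two_pos T.distortionConst_pos), c, hc, fun p => hle _⟩
  simp only [ENNReal.ofReal_toReal (regDensity_ne_top η _)]
  rw [towerMeasure_eq_lift, ← lift_withDensity _ (measurable_regDensity η),
    h.withDensity_regDensity]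

/-! ### Orbits starting in the base of the tower -/

lemma iterate_towerMap_level_zero {l : ℕ} {x : Δ₀} (h : l < T.R x) :
    T.towerMap^[l] (T.level 0 x) = T.level l x := by
  induction l with
  | zero => rfl
  | succ l ih => rw [Function.iterate_succ_apply', ih (by lia), towerMap_level_of_lt h]

lemma iterate_R_towerMap_level_zero (x : Δ₀) :
    T.towerMap^[T.R x] (T.level 0 x) = T.level 0 (T.FR x) := by
  obtain ⟨l, hl⟩ := Nat.exists_eq_succ_of_ne_zero (T.R_pos x).ne'
  rw [hl, Function.iterate_succ_apply', iterate_towerMap_level_zero (by lia),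
    towerMap_level_of_eq hl]

variable (T) in
/-- The time which the points of the cylinder of `w` need in the tower for `w.length` returns to
the base. -/
def returnTime (w : List T.I) : ℕ := (w.map fun i : T.I => T.Ret i).sum

lemma iterate_returnTime_towerMap_level_zero {w : List T.I} {x : Δ₀} (hx : x ∈ T.cyl w) :
    T.towerMap^[T.returnTime w] (T.level 0 x) = T.level 0 (T.FR^[w.length] x) := by
  induction w generalizing x with
  | nil => rfl
  | cons i w ih =>
    rw [returnTime, List.map_cons, List.sum_cons, add_comm, Function.iterate_add_apply,
      ← T.R_eq i i.2 x hx.1, iterate_R_towerMap_level_zero]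
    exact ih hx.2

variable (T) in
/-- The part of the tower which lies above `A` in the `l`-th level. -/
def levelSet (l : ℕ) (A : Set Δ₀) : Set T.Tower := {p | p.1.2 = l ∧ p.1.1 ∈ A}

lemma measurableSet_levelSet (l : ℕ) {A : Set Δ₀} (hA : MeasurableSet A) :
    MeasurableSet (T.levelSet l A) :=
  ((measurable_snd.comp measurable_subtype_coe) (measurableSet_singleton l)).inter
    ((measurable_fst.comp measurable_subtype_coe) hA)

lemma level_mem_levelSet {k l : ℕ} {x : Δ₀} (h : k < T.R x) {A : Set Δ₀} :
    T.level k x ∈ T.levelSet l A ↔ k = l ∧ x ∈ A := by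
  rw [level_of_lt h, levelSet, mem_ofPred_eq]

lemma restrict_lift_levelSet_zero (μ : Measure Δ₀) {A : Set Δ₀} (hA : MeasurableSet A) :
    (T.lift μ).restrict (T.levelSet 0 A) = (μ.restrict A).map (T.level 0) := by
  refine Measure.ext fun S hS => ?_
  rw [Measure.restrict_apply hS, lift_apply _ (hS.inter (measurableSet_levelSet 0 hA)),
    tsum_eq_single 0, Measure.map_apply (measurable_level 0) hS,
    Measure.restrict_apply (measurable_level 0 hS), slice_zero, preimage_inter]
  · congr 2
    ext x
    simp [level_mem_levelSet (T.R_pos x)]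
  · refine fun l hl => measure_mono_null ?_ measure_empty
    exact fun x hx => hl ((level_mem_levelSet hx.2).1 hx.1.2).1

lemma quasiMeasurePreserving_level_zero (μ : Measure Δ₀) :
    Measure.QuasiMeasurePreserving (T.level 0) μ (T.lift μ) := by
  refine ⟨measurable_level 0, ?_⟩
  rw [← μ.restrict_univ, ← restrict_lift_levelSet_zero μ .univ, μ.restrict_univ]
  exact Measure.restrict_le_self.absolutelyContinuous

/-! ### Bounded distortion along orbits of the tower map -/

variable (T) in
/-- The points of the base whose `n`-th iterate under the tower map lies in `A`, seen as a subset
of the base of the tower. -/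
def baseHit (n : ℕ) (A : Set Δ₀) : Set Δ₀ :=
  {x | T.towerMap^[n] (T.level 0 x) ∈ T.levelSet 0 A}

lemma measurableSet_baseHit (n : ℕ) {A : Set Δ₀} (hA : MeasurableSet A) :
    MeasurableSet (T.baseHit n A) :=
  (T.measurable_towerMap.iterate n).comp (measurable_level 0) (measurableSet_levelSet 0 hA)

lemma baseHit_zero (A : Set Δ₀) : T.baseHit 0 A = A := by
  ext x
  simp [baseHit, level_mem_levelSet (T.R_pos x)]

lemma notMem_baseHit {n : ℕ} {x : Δ₀} (hn : n ≠ 0) (h : n < T.R x) (A : Set Δ₀) :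
    x ∉ T.baseHit n A := by
  rw [baseHit, mem_ofPred_eq, iterate_towerMap_level_zero h, level_mem_levelSet h]
  exact fun h => hn h.1

lemma cyl_inter_baseHit {n : ℕ} {w : List T.I} (hn : T.returnTime w ≤ n) (A : Set Δ₀) :
    T.cyl w ∩ T.baseHit n A =
      T.cyl w ∩ T.FR^[w.length] ⁻¹' T.baseHit (n - T.returnTime w) A := by
  obtain ⟨k, rfl⟩ := Nat.exists_eq_add_of_le' hn
  ext x
  refine and_congr_right fun hx => ?_
  rw [baseHit, mem_ofPred_eq, Function.iterate_add_apply,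
    iterate_returnTime_towerMap_level_zero hx, Nat.add_sub_cancel, baseHit, mem_preimage,
    mem_ofPred_eq]

namespace BoundedDistortion

variable {μ : Measure Δ₀}

lemma branch_iterate {φ : Set Δ₀ → ℝ≥0∞} (h : T.BoundedDistortion φ) (w : List T.I) :
    T.BoundedDistortion fun A => φ (T.cyl w ∩ T.FR^[w.length] ⁻¹' A) := by
  induction w generalizing φ with
  | nil => simpa [cyl] using h
  | cons i w ih =>
    refine (ih (h.branch i)).congr fun A _ => ?_
    rw [preimage_inter, ← inter_assoc]
    rfl

lemma map_restrict_cyl (h : T.BoundedDistortion μ) (w : List T.I) :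
    T.BoundedDistortion ((μ.restrict (T.cyl w)).map T.FR^[w.length]) :=
  (h.branch_iterate w).congr fun A hA => by
    rw [Measure.map_apply (T.FR_meas.iterate _) hA,
      Measure.restrict_apply (T.FR_meas.iterate _ hA), inter_comm]

lemma measure_cyl_inter_baseHit_of_returnTime_le (h : T.BoundedDistortion μ) {n : ℕ}
    {w : List T.I} (hn : T.returnTime w ≤ n)
    (hhit : ∀ {σ : Measure Δ₀}, T.BoundedDistortion σ →
      T.BoundedDistortion fun A => σ (T.baseHit (n - T.returnTime w) A)) :
    T.BoundedDistortion fun A => μ (T.cyl w ∩ T.baseHit n A) :=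
  (hhit (h.map_restrict_cyl w)).congr fun A hA => by
    have hm := measurableSet_baseHit (T := T) (n - T.returnTime w) hA
    rw [Measure.map_apply (T.FR_meas.iterate _) hm,
      Measure.restrict_apply (T.FR_meas.iterate _ hm), cyl_inter_baseHit hn, inter_comm]

lemma measure_baseHit (h : T.BoundedDistortion μ) (n : ℕ) :
    T.BoundedDistortion fun A => μ (T.baseHit n A) := by
  induction n using Nat.strong_induction_on generalizing μ with
  | _ n ih =>
    rcases eq_or_ne n 0 with rfl | hn
    · simpa only [baseHit_zero] using h
    refine (tsum (φ := fun (i : T.I) A => μ (T.Λ i ∩ T.baseHit n A)) fun i => ?_).congr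
      fun A _ => measure_eq_tsum_Λ h.absolutelyContinuous _
    rw [← cyl_singleton]
    have hi : T.returnTime [i] = T.Ret i := List.sum_singleton
    rcases le_or_gt (T.returnTime [i]) n with hle | hlt
    · refine h.measure_cyl_inter_baseHit_of_returnTime_le hle (ih _ ?_)
      have := T.Ret_pos i i.2
      lia
    · refine (h.const_mul 0).congr fun A _ => ?_
      rw [zero_mul, cyl_singleton]
      refine measure_mono_null (fun x hx => ?_) measure_empty
      exact notMem_baseHit hn (by rwa [T.R_eq i i.2 x hx.1, ← hi]) A hx.2

lemma measure_cyl_inter_baseHit (h : T.BoundedDistortion μ) {n : ℕ} {w : List T.I}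
    (hn : T.returnTime w ≤ n) : T.BoundedDistortion fun A => μ (T.cyl w ∩ T.baseHit n A) :=
  h.measure_cyl_inter_baseHit_of_returnTime_le hn fun hσ => hσ.measure_baseHit _

end BoundedDistortion

/-! ### Backward orbits of densities of bounded distortion are constant -/

lemma measure_cyl_inter_preimage_iterate_eq_zero_iff (w : List T.I) {A : Set Δ₀}
    (hA : MeasurableSet A) : T.m₀ (T.cyl w ∩ T.FR^[w.length] ⁻¹' A) = 0 ↔ T.m₀ A = 0 := by
  induction w with
  | nil => simp [cyl]
  | cons i w ih =>
    rw [← ih, ← measure_branch_eq_zero_iff i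
      ((measurableSet_cyl w).inter (T.FR_meas.iterate _ hA)), preimage_inter, ← inter_assoc]
    rfl

lemma BoundedDistortion.le_distortionBound_sq_mul {η : Measure Δ₀} [IsFiniteMeasure η]
    (hη : T.BoundedDistortion η) {f : Δ₀ → ℝ≥0∞} (hf : T.BoundedDistortion (η.withDensity f))
    {w : List T.I} {A B : Set Δ₀}
    (hA : MeasurableSet A) (hB : MeasurableSet B) (hAw : A ⊆ T.cyl w) (hBw : B ⊆ T.cyl w)
    (hA0 : T.m₀ A ≠ 0) (hB0 : η B ≠ 0) {a b : ℝ≥0∞} (ha : ∀ᵐ x ∂η, x ∈ A → f x ≤ a)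
    (hb : ∀ᵐ x ∂η, x ∈ B → b ≤ f x) : b ≤ T.distortionBound w.length ^ 2 * a := by
  have hleA : η.withDensity f A ≤ a * η A := by
    rw [withDensity_apply _ hA, ← setLIntegral_const]
    exact setLIntegral_mono_ae' hA ha
  have hleB : b * η B ≤ η.withDensity f B := by
    rw [withDensity_apply _ hB, ← setLIntegral_const]
    exact setLIntegral_mono_ae' hB hb
  rw [← ENNReal.mul_le_mul_iff_left (mul_ne_zero hB0 hA0)
    (ENNReal.mul_ne_top (measure_ne_top _ _) (measure_ne_top _ _))]
  set e := T.distortionBound w.length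
  calc b * (η B * T.m₀ A) = b * η B * T.m₀ A := by ring
    _ ≤ η.withDensity f B * T.m₀ A := by gcongr
    _ ≤ e * (η.withDensity f A * T.m₀ B) := hf w B A hB hA hBw hAw
    _ ≤ e * (a * η A * T.m₀ B) := by gcongr
    _ = e * a * (η A * T.m₀ B) := by ring
    _ ≤ e * a * (e * (η B * T.m₀ A)) := mul_le_mul_right (hη w A B hA hB hAw hBw) _
    _ = e ^ 2 * a * (η B * T.m₀ A) := by ring

section BackwardOrbit

variable {η : Measure Δ₀} {h : ℤ → T.Tower → ℝ≥0∞}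

lemma ae_level_zero_eq_of_mem_cyl
    (hF : Measure.QuasiMeasurePreserving T.towerMap (T.lift η) (T.lift η))
    (hsucc : ∀ j, h j =ᵐ[T.lift η] h (j + 1) ∘ T.towerMap) (w : List T.I) (j : ℤ) :
    ∀ᵐ x ∂η, x ∈ T.cyl w →
      h j (T.level 0 x) = h (j + T.returnTime w) (T.level 0 (T.FR^[w.length] x)) := by
  filter_upwards [(quasiMeasurePreserving_level_zero η).ae
    (ae_eq_comp_iterate_of_ae_eq_comp hF hsucc (T.returnTime w) j)] with x hx hxw
  rw [hx, Function.comp_apply, iterate_returnTime_towerMap_level_zero hxw]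

variable [IsFiniteMeasure η]

lemma le_of_backward_orbit (hη : T.BoundedDistortion η) (hη0 : η univ ≠ 0)
    (hF : Measure.QuasiMeasurePreserving T.towerMap (T.lift η) (T.lift η))
    (hm : ∀ j, Measurable (h j)) (hsucc : ∀ j, h j =ᵐ[T.lift η] h (j + 1) ∘ T.towerMap)
    (hreg : ∀ j, T.BoundedDistortion (η.withDensity (h j ∘ T.level 0))) (j : ℤ) {a b : ℝ≥0∞}
    (ha : η {x | h j (T.level 0 x) ≤ a} ≠ 0) (hb : η {x | b ≤ h j (T.level 0 x)} ≠ 0) :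
    b ≤ a := by
  have hmj : Measurable fun x => h j (T.level 0 x) := (hm j).comp (measurable_level 0)
  obtain ⟨i, hi⟩ := T.nonempty_I
  refine T.le_of_forall_le_distortionBound_sq_mul fun k => ?_
  set w : List T.I := List.replicate k ⟨i, hi⟩
  have hmem : ∀ {S : Set Δ₀}, MeasurableSet S →
      MeasurableSet (T.cyl w ∩ T.FR^[w.length] ⁻¹' S) :=
    fun hS => (measurableSet_cyl w).inter (T.FR_meas.iterate _ hS)
  have hpull : ∀ {S : Set Δ₀}, MeasurableSet S → η S ≠ 0 →
      T.m₀ (T.cyl w ∩ T.FR^[w.length] ⁻¹' S) ≠ 0 := fun hS h0 hnull =>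
    h0 (hη.absolutelyContinuous ((measure_cyl_inter_preimage_iterate_eq_zero_iff w hS).1 hnull))
  have hshift := ae_level_zero_eq_of_mem_cyl hF hsucc w (j - T.returnTime w)
  rw [sub_add_cancel] at hshift
  have hA := measurableSet_le hmj (measurable_const (a := a))
  have hB := measurableSet_le (measurable_const (a := b)) hmj
  rw [← List.length_replicate (n := k) (a := (⟨i, hi⟩ : T.I))]
  refine hη.le_distortionBound_sq_mul (hreg (j - T.returnTime w)) (hmem hA) (hmem hB)
    inter_subset_left inter_subset_left (hpull hA ha)
    (fun h0 => hpull hB hb (hη.m₀_absolutelyContinuous hη0 h0)) ?_ ?_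
  · filter_upwards [hshift] with x hx hxA
    exact (hx hxA.1).trans_le hxA.2
  · filter_upwards [hshift] with x hx hxB
    exact (mem_preimage.1 hxB.2).trans_eq (hx hxB.1).symm

lemma exists_ae_level_zero_eq_const (hη : T.BoundedDistortion η) (hη0 : η univ ≠ 0)
    (hFR : MeasurePreserving T.FR η η)
    (hm : ∀ j, Measurable (h j)) (hsucc : ∀ j, h j =ᵐ[T.lift η] h (j + 1) ∘ T.towerMap)
    (hreg : ∀ j, T.BoundedDistortion (η.withDensity (h j ∘ T.level 0))) :
    ∃ c, ∀ j, ∀ᵐ x ∂η, h j (T.level 0 x) = c := by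
  have hF := (measurePreserving_towerMap hFR).quasiMeasurePreserving
  have hconst : ∀ j, ∃ c, ∀ᵐ x ∂η, h j (T.level 0 x) = c := fun j =>
    exists_ae_eq_const_of_forall_le fun _ _ => le_of_backward_orbit hη hη0 hF hm hsucc hreg j
  choose c hc using hconst
  refine ⟨c 0, fun j => ?_⟩
  suffices hper : ∀ r ∈ T.Ret '' T.I, Function.Periodic c (r : ℤ) by
    rw [← eq_apply_zero_of_periodic_of_gcd_eq_one (by simpa using T.Ret_gcd) hper j]
    exact hc j
  rintro _ ⟨i, hi, rfl⟩ j
  have hpos : η (T.cyl [⟨i, hi⟩]) ≠ 0 := fun h0 =>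
    (measure_cyl_pos _).ne' (hη.m₀_absolutelyContinuous hη0 h0)
  obtain ⟨x, hx, hshift, hj, hjr⟩ := ((frequently_ae_mem_iff.2 hpos).and_eventually
    ((ae_level_zero_eq_of_mem_cyl hF hsucc [⟨i, hi⟩] j).and
      ((hc j).and (hFR.quasiMeasurePreserving.ae (hc (j + T.Ret i)))))).exists
  rw [← hjr, ← hj, hshift hx]
  rfl

lemma exists_ae_eq_const_of_backward_orbit (hη : T.BoundedDistortion η) (hη0 : η univ ≠ 0)
    (hFR : MeasurePreserving T.FR η η)
    (hm : ∀ j, Measurable (h j)) (hsucc : ∀ j, h j =ᵐ[T.lift η] h (j + 1) ∘ T.towerMap)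
    (hreg : ∀ j, T.BoundedDistortion (η.withDensity (h j ∘ T.level 0))) :
    ∃ c, ∀ᵐ p ∂T.lift η, h 0 p = c := by
  have hF := (measurePreserving_towerMap hFR).quasiMeasurePreserving
  obtain ⟨c, hc⟩ := exists_ae_level_zero_eq_const hη hη0 hFR hm hsucc hreg
  refine ⟨c, (ae_lift_iff (measurableSet_eq_fun (hm 0) measurable_const)).2 fun k => ?_⟩
  filter_upwards [hc (-k), (quasiMeasurePreserving_level_zero η).ae
    (ae_eq_comp_iterate_of_ae_eq_comp hF hsucc k (-k))] with x hx hshift hk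
  rw [← hx, hshift, Function.comp_apply, neg_add_cancel, iterate_towerMap_level_zero hk]

end BackwardOrbit

/-! ### Mixing -/

variable {η : Measure Δ₀}

lemma lift_preimage_iterate_inter_levelSet_zero (μ : Measure Δ₀) (n : ℕ) {A C : Set Δ₀}
    (hA : MeasurableSet A) (hC : MeasurableSet C) :
    T.lift μ (T.towerMap^[n] ⁻¹' T.levelSet 0 A ∩ T.levelSet 0 C) = μ (C ∩ T.baseHit n A) := by
  have hmA := T.measurable_towerMap.iterate n (measurableSet_levelSet 0 hA)
  rw [← Measure.restrict_apply hmA, restrict_lift_levelSet_zero μ hC,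
    Measure.map_apply (measurable_level 0) hmA,
    Measure.restrict_apply (measurable_level 0 hmA), inter_comm]
  rfl

lemma setLIntegral_lift_levelSet_zero (μ : Measure Δ₀) {A : Set Δ₀} (hA : MeasurableSet A)
    {f : T.Tower → ℝ≥0∞} (hf : Measurable f) :
    ∫⁻ p in T.levelSet 0 A, f p ∂T.lift μ = ∫⁻ x in A, f (T.level 0 x) ∂μ := by
  rw [restrict_lift_levelSet_zero μ hA, lintegral_map hf (measurable_level 0)]

lemma preimage_towerMap_levelSet_succ (l : ℕ) (C : Set Δ₀) :
    T.towerMap ⁻¹' T.levelSet (l + 1) C = T.levelSet l (C ∩ {x | l + 1 < T.R x}) := by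
  ext ⟨⟨x, k⟩, hk⟩
  by_cases h : k + 1 < T.R x
  · simp only [mem_preimage, levelSet, towerMap, dif_pos h, mem_ofPred_eq, mem_inter_iff]
    grind
  · simp only [mem_preimage, levelSet, towerMap, dif_neg h, mem_ofPred_eq, mem_inter_iff]
    grind

lemma preimage_iterate_towerMap_levelSet {l : ℕ} {C : Set Δ₀} (hC : C ⊆ {x | l < T.R x}) :
    T.towerMap^[l] ⁻¹' T.levelSet l C = T.levelSet 0 C := by
  induction l with
  | zero => rfl
  | succ l ih =>
    rw [Function.iterate_succ', preimage_comp, preimage_towerMap_levelSet_succ,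
      inter_eq_left.2 hC]
    exact ih fun x hx => (Nat.lt_succ_self l).trans (hC hx)

lemma lift_preimage_iterate_inter_levelSet (hFR : MeasurePreserving T.FR η η) (n : ℕ) {l : ℕ}
    {C : Set Δ₀} (hCm : MeasurableSet C) (hC : C ⊆ {x | l < T.R x}) {A : Set T.Tower}
    (hA : MeasurableSet A) : T.lift η (T.towerMap^[n] ⁻¹' A ∩ T.levelSet l C) =
      T.lift η (T.towerMap^[n + l] ⁻¹' A ∩ T.levelSet 0 C) := by
  have hm := (T.measurable_towerMap.iterate n hA).inter (measurableSet_levelSet l hCm)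
  rw [← ((measurePreserving_towerMap hFR).iterate l).measure_preimage hm.nullMeasurableSet,
    preimage_inter, preimage_iterate_towerMap_levelSet hC, ← preimage_comp,
    ← Function.iterate_add]

lemma tendsto_lift_preimage_inter_levelSet_zero_cyl [IsFiniteMeasure η]
    [IsProbabilityMeasure (T.lift η)] (hη : T.BoundedDistortion η)
    (hη0 : η univ ≠ 0) (hFR : MeasurePreserving T.FR η η) (w : List T.I) {A : Set T.Tower}
    (hA : MeasurableSet A) :
    Tendsto (fun n => T.lift η (T.towerMap^[n] ⁻¹' A ∩ T.levelSet 0 (T.cyl w))) atTop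
      (𝓝 (T.lift η A * T.lift η (T.levelSet 0 (T.cyl w)))) := by
  set B := T.levelSet 0 (T.cyl w) with hBdef
  have hB : MeasurableSet B := measurableSet_levelSet 0 (measurableSet_cyl w)
  refine (tendsto_iff_ultrafilter _ _ _).2 fun 𝓤 h𝓤 => ?_
  obtain ⟨h, hm, hlim, hsucc⟩ :=
    exists_backward_densities (measurePreserving_towerMap hFR) hB 𝓤 h𝓤
  have hreg : ∀ j, T.BoundedDistortion (η.withDensity (h j ∘ T.level 0)) := fun j => by
    refine .of_tendsto (l := (𝓤 : Filter ℕ))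
      (φ := fun n S => η (T.cyl w ∩ T.baseHit ((n : ℤ) + j).toNat S)) (h𝓤 ?_) fun S hS => ?_
    · filter_upwards [eventually_ge_atTop (T.returnTime w + j.natAbs)] with n hn
      exact hη.measure_cyl_inter_baseHit (by lia)
    · have hlimS := hlim j (T.levelSet 0 S) (measurableSet_levelSet 0 hS)
      rw [setLIntegral_lift_levelSet_zero η hS (hm j)] at hlimS
      simpa only [withDensity_apply _ hS, Function.comp_apply, hBdef,
        lift_preimage_iterate_inter_levelSet_zero η _ hS (measurableSet_cyl w)] using hlimS
  obtain ⟨c, hc⟩ := exists_ae_eq_const_of_backward_orbit hη hη0 hFR hm hsucc hreg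
  have hlim0 : ∀ S, MeasurableSet S →
      Tendsto (fun n => T.lift η (T.towerMap^[n] ⁻¹' S ∩ B)) 𝓤 (𝓝 (c * T.lift η S)) := by
    intro S hS
    rw [← setLIntegral_const, ← setLIntegral_congr_fun_ae hS (hc.mono fun p hp _ => hp)]
    simpa using hlim 0 S hS
  have hcB : c = T.lift η B := by
    have huniv := hlim0 univ .univ
    simp only [preimage_univ, univ_inter, measure_univ, mul_one] at huniv
    exact tendsto_nhds_unique huniv tendsto_const_nhds
  rw [mul_comm, ← hcB]
  exact hlim0 A hA

lemma tendsto_lift_preimage_inter_levelSet_cyl_cons [IsFiniteMeasure η]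
    [IsProbabilityMeasure (T.lift η)] (hη : T.BoundedDistortion η)
    (hη0 : η univ ≠ 0) (hFR : MeasurePreserving T.FR η η) (l : ℕ) (i : T.I) (w : List T.I)
    {A : Set T.Tower} (hA : MeasurableSet A) :
    Tendsto (fun n => T.lift η (T.towerMap^[n] ⁻¹' A ∩ T.levelSet l (T.cyl (i :: w)))) atTop
      (𝓝 (T.lift η A * T.lift η (T.levelSet l (T.cyl (i :: w))))) := by
  rcases lt_or_ge l (T.Ret i) with hl | hl
  · have hcyl : T.cyl (i :: w) ⊆ {x | l < T.R x} := fun x hx =>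
      hl.trans_eq (T.R_eq i i.2 x hx.1).symm
    have hshift : ∀ n {S}, MeasurableSet S → T.lift η (T.towerMap^[n] ⁻¹' S ∩
        T.levelSet l (T.cyl (i :: w))) = T.lift η (T.towerMap^[n + l] ⁻¹' S ∩
        T.levelSet 0 (T.cyl (i :: w))) := fun n _ =>
      lift_preimage_iterate_inter_levelSet hFR n (measurableSet_cyl _) hcyl
    have hlevel := hshift 0 .univ
    simp only [preimage_univ, univ_inter] at hlevel
    simp only [hshift _ hA, hlevel]
    exact (tendsto_lift_preimage_inter_levelSet_zero_cyl hη hη0 hFR _ hA).comp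
      (tendsto_add_atTop_nat l)
  · have hempty : T.levelSet l (T.cyl (i :: w)) = ∅ := by
      refine eq_empty_of_forall_notMem fun p hp => ?_
      have hlt := hp.1 ▸ p.2
      rw [T.R_eq i i.2 _ hp.2.1] at hlt
      exact hlt.not_ge hl
    simp [hempty]

variable (T) in
/-- The cylinders of the tower: the sets lying, in a single level, above a cylinder of positive
length. Such a cylinder is contained in one `Λ i`, so the return time is constant on it. -/
def towerCylinders : Set (Set T.Tower) := {B | ∃ l i w, B = T.levelSet l (T.cyl (i :: w))}

lemma measurableSet_of_mem_towerCylinders {B : Set T.Tower} (hB : B ∈ T.towerCylinders) :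
    MeasurableSet B := by
  obtain ⟨l, i, w, rfl⟩ := hB
  exact measurableSet_levelSet l (measurableSet_cyl _)

lemma isPiSystem_towerCylinders : IsPiSystem T.towerCylinders := by
  rintro _ ⟨l, i, v, rfl⟩ _ ⟨l', i', w, rfl⟩ ⟨p, ⟨rfl, hpv⟩, ⟨rfl, hpw⟩⟩
  rcases le_total (i :: v).length (i' :: w).length with h | h
  · exact ⟨_, i', w, inter_eq_right.2 fun q hq =>
      ⟨hq.1, cyl_anti (isPrefix_of_mem_cyl h hpw hpv) hq.2⟩⟩
  · exact ⟨_, i, v, inter_eq_left.2 fun q hq =>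
      ⟨hq.1, cyl_anti (isPrefix_of_mem_cyl h hpv hpw) hq.2⟩⟩

variable (T) in
/-- The completion with respect to `ν` of the σ-algebra generated by the cylinders of the tower. -/
abbrev towerCylinderSigma (ν : Measure T.Tower) : MeasurableSpace T.Tower :=
  eventuallyMeasurableSpace (MeasurableSpace.generateFrom T.towerCylinders) (ae ν)

lemma measurableSet_levelSet_preimage_iterate_Λ (hη : η ≪ T.m₀) (l n : ℕ) (i : T.I) :
    MeasurableSet[T.towerCylinderSigma (T.lift η)] (T.levelSet l (T.FR^[n] ⁻¹' T.Λ i)) := by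
  refine ⟨⋃ v : {v : List T.I // v.length = n}, T.levelSet l (T.cyl (v ++ [i])), ?_, ?_⟩
  · refine .iUnion fun ⟨v, _⟩ => MeasurableSpace.measurableSet_generateFrom ?_
    cases v with
    | nil => exact ⟨l, i, [], rfl⟩
    | cons j v => exact ⟨l, j, v ++ [i], rfl⟩
  · filter_upwards [(quasiMeasurePreserving_fst η).ae (hη.ae_le (T.ae_exists_mem_cyl n))]
      with p ⟨v, hpv⟩
    refine propext ⟨fun hp => mem_iUnion.2 ⟨v, hp.1, ?_⟩, fun hp => ?_⟩
    · rw [cyl_append, cyl_singleton, v.2]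
      exact ⟨hpv, hp.2⟩
    · obtain ⟨u, hp⟩ := mem_iUnion.1 hp
      rw [cyl_append, cyl_singleton, u.2] at hp
      exact ⟨hp.1, hp.2.2⟩

lemma measurable_fst_towerCylinderSigma (hη : η ≪ T.m₀) :
    Measurable[T.towerCylinderSigma (T.lift η), cylinderSigma T.I T.Λ T.FR]
      fun p : T.Tower => p.1.1 := by
  refine @measurable_generateFrom _ _ (T.towerCylinderSigma (T.lift η)) _ _ ?_
  rintro _ ⟨n, i, hi, rfl⟩
  have hunion : (fun p : T.Tower => p.1.1) ⁻¹' (T.FR^[n] ⁻¹' T.Λ i) =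
      ⋃ l, T.levelSet l (T.FR^[n] ⁻¹' T.Λ i) := by
    ext p
    simp [levelSet]
  rw [hunion]
  exact .iUnion fun l => measurableSet_levelSet_preimage_iterate_Λ hη l n ⟨i, hi⟩

lemma measurableSet_levelSet_univ (hη : η ≪ T.m₀) (l : ℕ) :
    MeasurableSet[T.towerCylinderSigma (T.lift η)] (T.levelSet l univ) := by
  have hunion : T.levelSet l univ =ᵐ[T.lift η] ⋃ i : T.I, T.levelSet l (T.Λ i) := by
    filter_upwards [(quasiMeasurePreserving_fst η).ae (hη.ae_le T.ae_exists_mem_Λ)] with p ⟨i, hi⟩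
    refine propext ⟨fun hp => mem_iUnion.2 ⟨i, hp.1, hi⟩, fun hp => ?_⟩
    obtain ⟨_, hp⟩ := mem_iUnion.1 hp
    exact ⟨hp.1, mem_univ _⟩
  refine EventuallyMeasurableSet.congr ?_ hunion
  exact .iUnion fun i => measurableSet_levelSet_preimage_iterate_Λ hη l 0 i

lemma exists_ae_eq_generateFrom_towerCylinders (hη : η ≪ T.m₀) {B : Set T.Tower}
    (hB : MeasurableSet B) : ∃ B', MeasurableSet[MeasurableSpace.generateFrom T.towerCylinders] B' ∧
      B =ᵐ[T.lift η] B' := by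
  have hunion : B = ⋃ l, T.levelSet l (T.slice l B) := by
    ext p
    simp [levelSet, slice, level_of_lt p.2, p.2]
  suffices h : MeasurableSet[T.towerCylinderSigma (T.lift η)] B from h
  rw [hunion]
  refine .iUnion fun l => ?_
  obtain ⟨D, hD, hBD⟩ := T.generating _ (measurableSet_slice l hB)
  have hlevel : T.levelSet l (T.slice l B) =ᵐ[T.lift η]
      (T.levelSet l univ ∩ (fun p => p.1.1) ⁻¹' D : Set T.Tower) := by
    filter_upwards [(quasiMeasurePreserving_fst η).ae (hη.ae_le hBD.mem_iff)] with p hp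
    refine propext ⟨fun h => ⟨⟨h.1, mem_univ _⟩, hp.1 h.2⟩, fun h => ⟨h.1.1, hp.2 h.2⟩⟩
  refine EventuallyMeasurableSet.congr ?_ hlevel
  exact (measurableSet_levelSet_univ hη l).inter (measurable_fst_towerCylinderSigma hη hD)

lemma mixing_lift [IsFiniteMeasure η] [IsProbabilityMeasure (T.lift η)]
    (hη : T.BoundedDistortion η) (hη0 : η univ ≠ 0) (hFR : MeasurePreserving T.FR η η) :
    T.Mixing (T.lift η) := by
  intro A B hA hB
  refine tendsto_measure_inter_of_isPiSystem isPiSystem_towerCylinders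
    (fun _ => measurableSet_of_mem_towerCylinders)
    (fun _ => exists_ae_eq_generateFrom_towerCylinders hη.absolutelyContinuous) ?_ ?_ hB
  · simp only [((measurePreserving_towerMap hFR).iterate _).measure_preimage hA.nullMeasurableSet,
      measure_univ, mul_one]
    exact tendsto_const_nhds
  · rintro _ ⟨l, i, w, rfl⟩
    exact tendsto_lift_preimage_inter_levelSet_cyl_cons hη hη0 hFR l i w hA

end YoungTower

theorem young_tower_invariant_measure_general {Δ₀ : Type*} [MeasurableSpace Δ₀] (T : YoungTower Δ₀)
    (hR : Integrable (fun x => (T.R x : ℝ)) T.m₀) :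
    ∃ ν : Measure T.Tower,
      (IsProbabilityMeasure ν ∧ MeasurePreserving T.towerMap ν ν ∧
        ν ≪ T.towerMeasure ∧ T.towerMeasure ≪ ν) ∧
      (∀ ν' : Measure T.Tower, IsProbabilityMeasure ν' → MeasurePreserving T.towerMap ν' ν' →
        ν' ≪ T.towerMeasure → ν' = ν) ∧
      (∃ ρ : T.Tower → ℝ, Measurable ρ ∧
        ν = T.towerMeasure.withDensity (fun p => ENNReal.ofReal (ρ p)) ∧
        T.memFplus ρ ∧
        ∃ c : ℝ, 0 < c ∧ ∀ p, c ≤ ρ p) ∧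
      T.Mixing ν := by
  obtain ⟨η, _, hη0, hη, hFR, hone⟩ := T.exists_invariant_boundedDistortion_lift_univ_eq_one hR
  have : IsProbabilityMeasure (T.lift η) := ⟨hone⟩
  have hF := T.measurePreserving_towerMap hFR
  have hac : T.lift η ≪ T.towerMeasure :=
    T.towerMeasure_eq_lift ▸ T.lift_absolutelyContinuous hη.absolutelyContinuous
  have hac' : T.towerMeasure ≪ T.lift η :=
    T.towerMeasure_eq_lift ▸ T.lift_absolutelyContinuous (hη.m₀_absolutelyContinuous hη0)
  have hmix : T.Mixing (T.lift η) := T.mixing_lift hη hη0 hFR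
  have herg : Ergodic T.towerMap (T.lift η) :=
    ergodic_of_tendsto_measure_preimage_inter hF fun A hA => hmix A A hA hA
  exact ⟨T.lift η, ⟨this, hF, hac, hac'⟩,
    fun _ _ hF' h' => herg.eq_of_absolutelyContinuous hF' (h'.trans hac'),
    hη.exists_density_lift hη0, hmix⟩

end

/-- If the return time `R` of a Young tower is integrable with respect to `m₀`, then the tower
map `F` has a unique invariant probability measure `ν` equivalent to the reference measure `m`;
its density `dν/dm` (has a version that) belongs to `F_β⁺` and is bounded below by a positive
constant; and `(F, ν)` is mixing. -/
theorem young_tower_invariant_measure {Δ₀ : Type*} [MeasurableSpace Δ₀] (T : YoungTower Δ₀)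
    (hR : Integrable (fun x => (T.R x : ℝ)) T.m₀) :
    ∃ ν : Measure T.Tower,
      (IsProbabilityMeasure ν ∧ MeasurePreserving T.towerMap ν ν ∧
        ν ≪ T.towerMeasure ∧ T.towerMeasure ≪ ν) ∧
      (∀ ν' : Measure T.Tower, IsProbabilityMeasure ν' → MeasurePreserving T.towerMap ν' ν' →
        ν' ≪ T.towerMeasure → T.towerMeasure ≪ ν' → ν' = ν) ∧
      (∃ ρ : T.Tower → ℝ, Measurable ρ ∧
        ν = T.towerMeasure.withDensity (fun p => ENNReal.ofReal (ρ p)) ∧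
        T.memFplus ρ ∧
        ∃ c : ℝ, 0 < c ∧ ∀ p, c ≤ ρ p) ∧
      T.Mixing ν := by
  obtain ⟨ν, hν, huniq, hρ, hmix⟩ := young_tower_invariant_measure_general T hR
  exact ⟨ν, hν, fun ν' hν' hF hac _ => huniq ν' hν' hF hac, hρ, hmix⟩
end

section
/- Let $d\ge 0$, and let $N$ and $P$ be manifolds (Hausdorff, second countable, without boundary, not necessarily compact or connected) of the same dimension $d$, the topology of $P$ being induced by a metric (which may take the value $\infty$, e.g. the Riemannian distance). Let $\mu_N$ be a locally finite Borel measure on $N$ and $\mu_P$ a finite Borel measure on $P$ (for example, the Riemannian volumes, where $P$ has finite volume). Call a map $\Theta:N\to P$ absolutely continuous with Jacobian $J:N\to\mathbb R$ if $\Theta$ is continuous and injective, $J$ is $\mu_N$-integrable, and $\mu_P(\Theta(A))=\int_A J\,d\mu_N$ for every Borel set $A\subseteq N$. For each $n\in\mathbb N$ let $\Theta_n:N\to P$ be absolutely continuous with Jacobian $J_n$. Assume that $(\Theta_n)$ converges uniformly to an injective continuous map $\Theta:N\to P$, and that $(J_n)$ converges uniformly to an integrable continuous function $J:N\to\mathbb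 R$. Then $\Theta$ is absolutely continuous with Jacobian $J$; that is, $\mu_P(\Theta(A))=\int_A J\,d\mu_N$ for every Borel set $A\subseteq N$. -/
open MeasureTheory Filter

/-- `Θ : N → P` is absolutely continuous with Jacobian `J` (for the measures `μN`, `μP`):
`Θ` is an injective continuous map, `J` is integrable, and `μP (Θ(A)) = ∫_A J dμN` for every
Borel set `A`. The identity is one of real numbers; finiteness of its left side is part of it, so
that the conversion of `μP (Θ(A))` to a real number never takes a default value. -/
structure IsAbsolutelyContinuousWithJacobian {N P : Type*}
    [TopologicalSpace N] [MeasurableSpace N] [TopologicalSpace P] [MeasurableSpace P]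
    (μN : Measure N) (μP : Measure P) (Θ : N → P) (J : N → ℝ) : Prop where
  continuous : Continuous Θ
  injective : Function.Injective Θ
  integrable : Integrable J μN
  measure_image : ∀ A : Set N, MeasurableSet A →
    μP (Θ '' A) < ⊤ ∧ (μP (Θ '' A)).toReal = ∫ x in A, J x ∂μN

/-!
The measures `A ↦ μP (Θ '' A)` and `J • μN` are compared on a compact set `K`. Eventually
`Θn i '' K` lies in any given neighbourhood of `Θ '' K`, so outer regularity of `μP` gives
`∫_K J dμN ≤ μP (Θ '' K)`. The reverse inequality needs `Θ '' K ⊆ Θn i '' U` for large `i` and every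
neighbourhood `U` of `K`. By invariance of domain the maps `Θn i` are open, and a small connected
neighbourhood of a point of `Θ '' K` that meets `Θn i '' U`, but not the image of the frontier of
`U`, is contained in `Θn i '' U`.

Invariance of domain is deduced from Brouwer's fixed point theorem, and the latter from the
nonexistence of a `C¹` retraction `r` of a ball onto its sphere: with `g x = r x - x`, the integral
of `det (1 + t • g')` over the ball is a polynomial in `t`. For small `t` the map `x ↦ x + t • g x`
is a bijection of the ball, so the polynomial is constant, equal to the volume of the ball. At
`t = 1` it vanishes, because `r` takes values in a sphere.
-/

open Metric Set Topology Polynomial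

section Volume

theorem exists_polynomial_eval_eq_det_one_add_smul {R M : Type*} [CommRing R] [Nontrivial R]
    [AddCommGroup M] [Module R M] [Module.Free R M] [Module.Finite R M] (A : M →ₗ[R] M) :
    ∃ p : R[X], p.natDegree ≤ Module.finrank R M ∧ ∀ t, p.eval t = LinearMap.det (1 + t • A) := by
  let b := Module.Free.chooseBasis R M
  let B := LinearMap.toMatrix b b A
  refine ⟨Matrix.det ((X : R[X]) • B.map C + (1 : Matrix _ _ R).map C), ?_, fun t ↦ ?_⟩
  · rw [Module.finrank_eq_card_chooseBasisIndex]
    exact natDegree_det_X_add_C_le B 1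
  · rw [← LinearMap.det_toMatrix b, ← coe_evalRingHom, RingHom.map_det]
    congr 1
    ext i j
    by_cases hij : i = j <;> simp [B, LinearMap.toMatrix_one, hij, mul_comm t, add_comm]

theorem exists_polynomial_eval_eq_integral {α : Type*} [MeasurableSpace α] {μ : Measure α}
    {F : ℝ → α → ℝ} {n : ℕ} (hF : ∀ x, ∃ p : ℝ[X], p.natDegree ≤ n ∧ ∀ t, p.eval t = F t x)
    (hint : ∀ t, Integrable (F t) μ) : ∃ p : ℝ[X], ∀ t, p.eval t = ∫ x, F t x ∂μ := by
  let nodes := Finset.range (n + 1)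
  let v : ℕ → ℝ := Nat.cast
  have hv : InjOn v nodes := Nat.cast_injective.injOn
  have hinterp : ∀ t x, F t x = ∑ i ∈ nodes, F (v i) x * (Lagrange.basis nodes v i).eval t := by
    intro t x
    obtain ⟨p, hdeg, hp⟩ := hF x
    have hdeg' : p.degree < nodes.card :=
      degree_le_natDegree.trans_lt <| by
        rw [Finset.card_range]
        exact_mod_cast Nat.lt_succ_of_le hdeg
    have h := congrArg (eval t)
      (Lagrange.eq_interpolate_of_eval_eq (fun i ↦ F (v i) x) hv hdeg' fun i _ ↦ hp (v i))
    simpa only [hp, Lagrange.interpolate_apply, eval_finsetSum, eval_mul, eval_C] using h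
  refine ⟨Lagrange.interpolate nodes v fun i ↦ ∫ x, F (v i) x ∂μ, fun t ↦ ?_⟩
  simp only [hinterp t, Lagrange.interpolate_apply, eval_finsetSum, eval_mul, eval_C]
  rw [integral_finsetSum _ fun i _ ↦ (hint (v i)).mul_const _]
  simp only [integral_mul_const]

theorem inter_frontier_nonempty_of_isPreconnected {X : Type*} [TopologicalSpace X] {s t : Set X}
    (hs : IsPreconnected s) (ht : (s ∩ t).Nonempty) (ht' : (s \ t).Nonempty) :
    (s ∩ frontier t).Nonempty := by
  obtain ⟨x, hxs, hxt⟩ := ht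
  obtain ⟨y, hys, hyt⟩ := ht'
  by_contra hempty
  have hfr : ∀ z ∈ s, z ∉ frontier t := fun z hzs hzt ↦ hempty ⟨z, hzs, hzt⟩
  have hcover : s ⊆ interior t ∪ (closure t)ᶜ := fun z hz ↦
    or_iff_not_imp_left.2 fun hint hcl ↦ hfr z hz ⟨hcl, hint⟩
  have hx : x ∈ interior t := by_contra fun hint ↦ hfr x hxs ⟨subset_closure hxt, hint⟩
  have hy : y ∉ closure t := fun hcl ↦ hfr y hys ⟨hcl, fun hint ↦ hyt (interior_subset hint)⟩
  obtain ⟨z, -, hzint, hzcl⟩ := hs _ _ isOpen_interior isClosed_closure.isOpen_compl hcover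
    ⟨x, hxs, hx⟩ ⟨y, hys, hy⟩
  exact hzcl (interior_subset_closure hzint)

theorem exists_mem_frontier_dist_le {E : Type*} [NormedAddCommGroup E] [NormedSpace ℝ E]
    {s : Set E} {x y : E} (hx : x ∈ s) (hy : y ∉ s) : ∃ z ∈ frontier s, dist x z ≤ dist x y := by
  obtain ⟨z, hz, hzs⟩ := inter_frontier_nonempty_of_isPreconnected
    (convex_segment x y).isPreconnected ⟨x, left_mem_segment ℝ x y, hx⟩
    ⟨y, right_mem_segment ℝ x y, hy⟩
  have hsum := dist_add_dist_of_mem_segment hz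
  exact ⟨z, hzs, by linarith [dist_nonneg (x := z) (y := y)]⟩

theorem lipschitzWith_indicator_of_eq_zero_on_frontier {E F : Type*} [NormedAddCommGroup E]
    [NormedSpace ℝ E] [SeminormedAddCommGroup F] {s : Set E} {g : E → F} {K : NNReal}
    (hs : IsClosed s) (hg : LipschitzOnWith K g s) (h0 : ∀ x ∈ frontier s, g x = 0) :
    LipschitzWith K (s.indicator g) := by
  have hin_out : ∀ x ∈ s, ∀ y ∉ s, ‖g x‖ ≤ K * dist x y := by
    intro x hx y hy
    obtain ⟨z, hz, hxz⟩ := exists_mem_frontier_dist_le hx hy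
    have h := hg.dist_le_mul x hx z (hs.frontier_subset hz)
    rw [h0 z hz, dist_zero_right] at h
    exact h.trans (by gcongr)
  refine LipschitzWith.of_dist_le_mul fun x y ↦ ?_
  by_cases hx : x ∈ s <;> by_cases hy : y ∈ s
  · simpa [hx, hy] using hg.dist_le_mul x hx y hy
  · simpa [hx, hy] using hin_out x hx y hy
  · simpa [hx, hy, dist_comm x y] using hin_out y hy x hx
  · simp only [hx, hy, not_false_eq_true, indicator_of_notMem, dist_self]
    positivity

theorem bijective_add_of_lipschitzWith {E : Type*} [NormedAddCommGroup E] [CompleteSpace E]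
    {g : E → E} {K : NNReal} (hg : LipschitzWith K g) (hK : K < 1) :
    Function.Bijective fun x ↦ x + g x := by
  refine (Function.bijective_iff_existsUnique _).2 fun y ↦ ?_
  have hcontr : ContractingWith K fun x ↦ y - g x :=
    ⟨hK, LipschitzWith.of_dist_le_mul fun u v ↦ by
      rw [dist_sub_left]
      exact hg.dist_le_mul u v⟩
  have hiff : ∀ x, x + g x = y ↔ Function.IsFixedPt (fun x ↦ y - g x) x := fun x ↦ by
    rw [Function.IsFixedPt, sub_eq_iff_eq_add, eq_comm]
  exact ⟨hcontr.fixedPoint, (hiff _).2 hcontr.fixedPoint_isFixedPt,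
    fun x hx ↦ hcontr.fixedPoint_unique ((hiff x).1 hx)⟩

variable {E : Type*} [NormedAddCommGroup E] [NormedSpace ℝ E] {s : Set E} {g : E → E}

theorem bijOn_add_of_lipschitzOnWith [CompleteSpace E] {K : NNReal} (hs : IsClosed s)
    (hg : LipschitzOnWith K g s) (hK : K < 1) (h0 : ∀ x ∈ frontier s, g x = 0) :
    BijOn (fun x ↦ x + g x) s s := by
  have hbij := bijective_add_of_lipschitzWith
    (lipschitzWith_indicator_of_eq_zero_on_frontier hs hg h0) hK
  have hcompl : BijOn (fun x ↦ x + s.indicator g x) sᶜ sᶜ :=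
    (bijOn_id sᶜ).congr fun x hx ↦ by simp [indicator_of_notMem hx]
  have h := hcompl.compl hbij
  rw [compl_compl] at h
  exact h.congr fun x hx ↦ by simp [indicator_of_mem hx]

variable [FiniteDimensional ℝ E] [MeasurableSpace E] [BorelSpace E] (μ : Measure E)
  [μ.IsAddHaarMeasure] {g' : E → E →L[ℝ] E}

theorem setIntegral_det_one_add_eq_of_norm_le {K : NNReal} (hs : IsClosed s) (hconv : Convex ℝ s)
    (hg : ∀ x ∈ s, HasFDerivWithinAt g (g' x) s x) (h0 : ∀ x ∈ frontier s, g x = 0) (hK : K < 1)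
    (hg'K : ∀ x ∈ s, ‖g' x‖ ≤ K) (hdet : ∀ x ∈ s, 0 < (1 + g' x).det) :
    ∫ x in s, (1 + g' x).det ∂μ = μ.real s := by
  have hbij := bijOn_add_of_lipschitzOnWith hs
    (hconv.lipschitzOnWith_of_nnnorm_hasFDerivWithin_le hg hg'K) hK h0
  have hderiv : ∀ x ∈ s, HasFDerivWithinAt (fun x ↦ x + g x) (1 + g' x) s x :=
    fun x hx ↦ (hasFDerivWithinAt_id x s).add (hg x hx)
  calc ∫ x in s, (1 + g' x).det ∂μ = ∫ x in s, |(1 + g' x).det| • (1 : ℝ) ∂μ :=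
        setIntegral_congr_fun hs.measurableSet fun x hx ↦ by simp [abs_of_pos (hdet x hx)]
    _ = ∫ _ in (fun x ↦ x + g x) '' s, (1 : ℝ) ∂μ :=
        (integral_image_eq_integral_abs_det_fderiv_smul μ hs.measurableSet hderiv
          hbij.injOn fun _ ↦ (1 : ℝ)).symm
    _ = μ.real s := by simp [hbij.image_eq]

theorem eventually_setIntegral_det_one_add_smul_eq (hs : IsCompact s) (hconv : Convex ℝ s)
    (hg : ∀ x ∈ s, HasFDerivWithinAt g (g' x) s x) (hg' : ContinuousOn g' s)
    (h0 : ∀ x ∈ frontier s, g x = 0) :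
    ∀ᶠ t : ℝ in 𝓝 0, ∫ x in s, (1 + t • g' x).det ∂μ = μ.real s := by
  obtain ⟨C, hC⟩ := hs.exists_bound_of_continuousOn hg'
  have hdet : ∀ᶠ L in 𝓝 (0 : E →L[ℝ] E), 0 < (1 + L).det :=
    (ContinuousLinearMap.continuous_det.comp
      (continuous_const_add (1 : E →L[ℝ] E))).continuousAt.eventually_const_lt
        (by simp [ContinuousLinearMap.det])
  obtain ⟨η, hη, hdetη⟩ := Metric.eventually_nhds_iff.1 hdet
  have hsmall : Tendsto (fun t : ℝ ↦ ‖t‖ * C) (𝓝 0) (𝓝 0) := by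
    simpa using (tendsto_norm_zero (E := ℝ)).mul_const C
  filter_upwards [hsmall.eventually_lt_const (half_pos one_pos), hsmall.eventually_lt_const hη]
    with t ht htη
  have hbound : ∀ x ∈ s, ‖t • g' x‖ ≤ ‖t‖ * C := fun x hx ↦ by
    rw [norm_smul]
    gcongr
    exact hC x hx
  exact setIntegral_det_one_add_eq_of_norm_le (K := 2⁻¹) μ hs.isClosed hconv
    (fun x hx ↦ (hg x hx).const_smul t) (fun x hx ↦ by simp [h0 x hx]) (by norm_num)
    (fun x hx ↦ (hbound x hx).trans (by simpa using ht.le))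
    fun x hx ↦ hdetη (by simpa using (hbound x hx).trans_lt htη)

theorem setIntegral_det_fderiv_eq_of_eq_id_on_frontier {f : E → E} {f' : E → E →L[ℝ] E}
    (hs : IsCompact s) (hconv : Convex ℝ s) (hf : ∀ x ∈ s, HasFDerivWithinAt f (f' x) s x)
    (hf' : ContinuousOn f' s) (hid : ∀ x ∈ frontier s, f x = x) :
    ∫ x in s, (f' x).det ∂μ = μ.real s := by
  have hg' : ContinuousOn (fun x ↦ f' x - 1) s := hf'.sub continuousOn_const
  have hint : ∀ t : ℝ, Integrable (fun x ↦ (1 + t • (f' x - 1)).det) (μ.restrict s) := fun t ↦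
    (ContinuousLinearMap.continuous_det.comp_continuousOn
      (continuousOn_const.add (hg'.const_smul t))).integrableOn_compact hs
  obtain ⟨p, hp⟩ := exists_polynomial_eval_eq_integral
    (fun x ↦ exists_polynomial_eval_eq_det_one_add_smul ((f' x - 1 : E →L[ℝ] E) : E →ₗ[ℝ] E)) hint
  have hconst : p = C (μ.real s) := by
    refine eq_of_infinite_eval_eq _ _ (infinite_of_mem_nhds 0 ?_)
    filter_upwards [eventually_setIntegral_det_one_add_smul_eq μ hs hconv
      (fun x hx ↦ (hf x hx).sub (hasFDerivWithinAt_id x s)) hg' fun x hx ↦ by simp [hid x hx]]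
      with t ht
    rw [hp, eval_C]
    exact ht
  simpa [hconst] using (hp 1).symm

end Volume

theorem exists_contDiff_forall_dist_lt {E F : Type*} [NormedAddCommGroup E] [NormedSpace ℝ E]
    [FiniteDimensional ℝ E] [NormedAddCommGroup F] [NormedSpace ℝ F] [FiniteDimensional ℝ F]
    {s : Set E} {f : E → F} {ε : ℝ} (hs : IsClosed s) (hf : ContinuousOn f s) (hε : 0 < ε)
    (n : ℕ∞) : ∃ Q : E → F, ContDiff ℝ n Q ∧ ∀ x ∈ s, dist (Q x) (f x) < ε := by
  obtain ⟨g, hg⟩ := ContinuousMap.exists_restrict_eq hs ⟨_, hf.domRestrict⟩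
  obtain ⟨Q, hQ, hQg, -⟩ := g.continuous.exists_contDiff_approx n
    (ε := fun _ ↦ ε) continuous_const fun _ ↦ hε
  have hgf : ∀ x ∈ s, g x = f x := fun x hx ↦ congrArg (fun h ↦ h ⟨x, hx⟩) hg
  exact ⟨Q, hQ, fun x hx ↦ hgf x hx ▸ hQg x⟩

section Brouwer

variable {E : Type*} [NormedAddCommGroup E] [InnerProductSpace ℝ E] [FiniteDimensional ℝ E]

theorem det_eq_zero_of_norm_eq_one {r : E → E} {L : E →L[ℝ] E} {s : Set E} {x : E}
    (hs : UniqueDiffWithinAt ℝ s x) (hx : x ∈ s) (hr : HasFDerivWithinAt r L s x)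
    (h1 : ∀ y ∈ s, ‖r y‖ = 1) : L.det = 0 := by
  by_contra hdet
  obtain ⟨v, hv⟩ : ∃ v, L v = r x :=
    ((Module.End.isUnit_iff _).1 ((LinearMap.isUnit_iff_isUnit_det (L : E →ₗ[ℝ] E)).2
      (isUnit_iff_ne_zero.2 hdet))).2 (r x)
  have hconst : HasFDerivWithinAt (fun y ↦ ‖r y‖ ^ 2) (0 : E →L[ℝ] ℝ) s x :=
    (hasFDerivWithinAt_const 1 x s).congr (fun y hy ↦ by simp [h1 y hy]) (by simp [h1 x hx])
  have h := congrArg (fun A ↦ A v) (hs.eq hr.norm_sq hconst)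
  simp [hv, h1 x hx] at h

theorem not_exists_contDiffOn_retraction_sphere :
    ¬∃ r : E → E, ContDiffOn ℝ 1 r (closedBall 0 1) ∧
      MapsTo r (closedBall 0 1) (sphere 0 1) ∧ EqOn r id (sphere 0 1) := by
  rintro ⟨r, hr, hmaps, hid⟩
  borelize E
  let μ : Measure E := Measure.addHaar
  have huniq : UniqueDiffOn ℝ (closedBall (0 : E) 1) :=
    uniqueDiffOn_convex (convex_closedBall _ _) (by simp [interior_closedBall])
  have hderiv : ∀ x ∈ closedBall (0 : E) 1,
      HasFDerivWithinAt r (fderivWithin ℝ r (closedBall 0 1) x) (closedBall 0 1) x :=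
    fun x hx ↦ (hr.differentiableOn one_ne_zero x hx).hasFDerivWithinAt
  have hvol := setIntegral_det_fderiv_eq_of_eq_id_on_frontier μ (isCompact_closedBall 0 1)
    (convex_closedBall 0 1) hderiv (hr.continuousOn_fderivWithin huniq le_rfl)
    (by rw [frontier_closedBall _ one_ne_zero]; exact hid)
  have hdet : ∀ x ∈ closedBall (0 : E) 1, (fderivWithin ℝ r (closedBall 0 1) x).det = 0 :=
    fun x hx ↦ det_eq_zero_of_norm_eq_one (huniq x hx) hx (hderiv x hx)
      fun y hy ↦ mem_sphere_zero_iff_norm.1 (hmaps hy)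
  rw [setIntegral_eq_zero_of_forall_eq_zero hdet] at hvol
  exact (ENNReal.toReal_pos (measure_closedBall_pos μ 0 one_pos).ne'
    measure_closedBall_lt_top.ne).ne hvol

theorem exists_isFixedPt_of_contDiff {Q : E → E} {c : ℝ} (hQ : ContDiff ℝ 1 Q) (hc0 : 0 < c)
    (hc1 : c < 1) (hQc : ∀ x ∈ closedBall (0 : E) 1, ‖Q x‖ ≤ c) :
    ∃ x ∈ closedBall (0 : E) 1, Function.IsFixedPt Q x := by
  by_contra! hfix
  let φ : ContDiffBump (0 : E) := ⟨c, 1, hc0, hc1⟩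
  let R : E → E := fun x ↦ x - φ x • Q x
  have hR : ContDiff ℝ 1 R := contDiff_id.sub (φ.contDiff.smul hQ)
  have hR0 : ∀ x ∈ closedBall (0 : E) 1, R x ≠ 0 := by
    intro x hx h0
    have hxφ : x = φ x • Q x := sub_eq_zero.1 h0
    have hxc : ‖x‖ ≤ c := calc
      ‖x‖ = φ x * ‖Q x‖ := by
        conv_lhs => rw [hxφ]
        rw [norm_smul, Real.norm_of_nonneg φ.nonneg]
      _ ≤ 1 * c := mul_le_mul φ.le_one (hQc x hx) (norm_nonneg _) zero_le_one
      _ = c := one_mul c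
    rw [φ.one_of_mem_closedBall (mem_closedBall_zero_iff.2 hxc), one_smul] at hxφ
    exact hfix x hx hxφ.symm
  have hRn : ∀ x ∈ closedBall (0 : E) 1, ‖R x‖ ≠ 0 := fun x hx ↦ norm_ne_zero_iff.2 (hR0 x hx)
  refine not_exists_contDiffOn_retraction_sphere ⟨fun x ↦ ‖R x‖⁻¹ • R x,
    ((hR.contDiffOn.norm ℝ hR0).inv hRn).smul hR.contDiffOn,
    fun x hx ↦ mem_sphere_zero_iff_norm.2 (norm_smul_inv_norm (𝕜 := ℝ) (hR0 x hx)),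
    fun x hx ↦ ?_⟩
  rw [mem_sphere_zero_iff_norm] at hx
  have hφ : φ x = 0 := φ.zero_of_le_dist (by simp [φ, hx])
  simp [R, hφ, hx]

theorem exists_isFixedPt_closedBall {F : E → E} (hF : ContinuousOn F (closedBall 0 1))
    (hmaps : MapsTo F (closedBall 0 1) (closedBall 0 1)) :
    ∃ x ∈ closedBall (0 : E) 1, Function.IsFixedPt F x := by
  obtain ⟨a, ha, hmin⟩ := (isCompact_closedBall (0 : E) 1).exists_isMinOn ⟨0, by simp⟩
    (hF.sub continuousOn_id).norm
  by_contra! hfix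
  have hm : 0 < ‖F a - a‖ := norm_sub_pos_iff.2 (hfix a ha)
  obtain ⟨ε, hε0, hε⟩ := exists_between (lt_min hm one_pos)
  obtain ⟨hεm, hε1⟩ := lt_min_iff.1 hε
  obtain ⟨Q, hQ, hQF⟩ := exists_contDiff_forall_dist_lt isClosed_closedBall
    (hF.const_smul (1 - ε / 2)) (show 0 < ε / 4 by positivity) 1
  have hF1 : ∀ x ∈ closedBall (0 : E) 1, ‖F x‖ ≤ 1 :=
    fun x hx ↦ mem_closedBall_zero_iff.1 (hmaps hx)
  simp only [dist_eq_norm] at hQF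
  obtain ⟨x, hx, hxQ⟩ := exists_isFixedPt_of_contDiff (c := 1 - ε / 4) hQ (by linarith)
    (by linarith) fun x hx ↦ calc
      ‖Q x‖ ≤ ‖Q x - (1 - ε / 2) • F x‖ + ‖(1 - ε / 2) • F x‖ := norm_le_norm_sub_add _ _
      _ ≤ ε / 4 + (1 - ε / 2) * 1 := by
        rw [norm_smul, Real.norm_of_nonneg (by linarith)]
        gcongr
        · exact (hQF x hx).le
        · linarith
        · exact hF1 x hx
      _ = 1 - ε / 4 := by ring
  have hclose : ‖F x - x‖ ≤ ε := calc
    ‖F x - x‖ = ‖(ε / 2) • F x - (Q x - (1 - ε / 2) • F x)‖ := by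
      rw [hxQ]
      congr 1
      module
    _ ≤ ε / 2 * 1 + ε / 4 := by
      refine (norm_sub_le _ _).trans (add_le_add ?_ (hQF x hx).le)
      rw [norm_smul, Real.norm_of_nonneg (by linarith)]
      gcongr
      exact hF1 x hx
    _ ≤ ε := by linarith
  exact ((hmin hx).trans hclose).not_gt hεm

theorem exists_eq_zero_of_norm_sub_le {H : E → E} (hH : ContinuousOn H (closedBall 0 1))
    (hle : ∀ x ∈ closedBall (0 : E) 1, ‖H x - x‖ ≤ 1) : ∃ x ∈ closedBall (0 : E) 1, H x = 0 := by
  obtain ⟨x, hx, hfix⟩ := exists_isFixedPt_closedBall (F := fun x ↦ x - H x)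
    (continuousOn_id.sub hH)
    fun x hx ↦ mem_closedBall_zero_iff.2 (by rw [norm_sub_rev]; exact hle x hx)
  exact ⟨x, hx, sub_eq_self.1 hfix⟩

end Brouwer

section InvarianceOfDomain

variable {E : Type*} [NormedAddCommGroup E]

section NormedSpace

variable [NormedSpace ℝ E]

theorem exists_continuous_dist_lt_forall_ne_zero [FiniteDimensional ℝ E] [MeasurableSpace E]
    [BorelSpace E] (μ : Measure E) [μ.IsAddHaarMeasure] {G : E → E} (hG : Continuous G)
    {s : Set E} (hs : μ s = 0) {δ : ℝ} (hδ : 0 < δ) :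
    ∃ G' : E → E, Continuous G' ∧ (∀ y, dist (G' y) (G y) < δ) ∧ ∀ y ∈ s, G' y ≠ 0 := by
  obtain ⟨Q, hQ, hQG, -⟩ := hG.exists_contDiff_approx 1
    (ε := fun _ ↦ δ / 2) continuous_const fun _ ↦ half_pos hδ
  have hnull : μ (Q '' s) = 0 := addHaar_image_eq_zero_of_differentiableOn_of_addHaar_eq_zero μ
    (hQ.differentiable one_ne_zero).differentiableOn hs
  obtain ⟨v, hv, hvQ⟩ : ∃ v ∈ ball (0 : E) (δ / 2), v ∉ Q '' s := by
    by_contra! hsub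
    exact (measure_ball_pos μ (0 : E) (half_pos hδ)).ne' (measure_mono_null hsub hnull)
  refine ⟨fun y ↦ Q y - v, hQ.continuous.sub continuous_const, fun y ↦ ?_,
    fun y hy h0 ↦ hvQ ⟨y, hy, sub_eq_zero.1 h0⟩⟩
  calc dist (Q y - v) (G y) ≤ dist (Q y - v) (Q y) + dist (Q y) (G y) := dist_triangle _ _ _
    _ < δ / 2 + δ / 2 := by
      rw [dist_self_sub_left]
      exact add_lt_add (mem_ball_zero_iff.1 hv) (hQG y)
    _ = δ := add_halves δ

/-- The radial retraction of the punctured space onto the complement of the open ball of radius `ε`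
about `0`. It takes the value `0` at `0`. -/
noncomputable def radialRetraction (ε : ℝ) (y : E) : E := max (ε / ‖y‖) 1 • y

theorem continuousOn_radialRetraction (ε : ℝ) :
    ContinuousOn (radialRetraction ε : E → E) {0}ᶜ :=
  ((continuousOn_const.div continuous_norm.continuousOn fun _ hy ↦ norm_ne_zero_iff.2 hy).sup
    continuousOn_const).smul continuousOn_id

theorem radialRetraction_of_le_norm {ε : ℝ} {y : E} (hy : ε ≤ ‖y‖) : radialRetraction ε y = y := by
  rw [radialRetraction, max_eq_right (div_le_one_of_le₀ hy (norm_nonneg y)), one_smul]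

theorem norm_radialRetraction_of_norm_le {ε : ℝ} {y : E} (hy0 : y ≠ 0) (hy : ‖y‖ ≤ ε) :
    ‖radialRetraction ε y‖ = ε := by
  have hpos : 0 < ‖y‖ := norm_pos_iff.2 hy0
  rw [radialRetraction, max_eq_left ((one_le_div hpos).2 hy), norm_smul, norm_div, norm_norm,
    Real.norm_of_nonneg (hpos.le.trans hy), div_mul_cancel₀ _ hpos.ne']

end NormedSpace

section InnerProductSpace

variable [InnerProductSpace ℝ E] [FiniteDimensional ℝ E]

theorem exists_radialRetraction_comp_eq_zero {f G : E → E} (hf : ContinuousOn f (closedBall 0 1))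
    (hf0 : ∀ x ∈ closedBall (0 : E) 1, f x ≠ 0) (hG : Continuous G)
    (hGf : ∀ x ∈ closedBall (0 : E) 1, ‖G (f x) - x‖ ≤ 1 / 3) {ε : ℝ}
    (hGε : ∀ y ∈ closedBall (0 : E) ε, ‖G y‖ ≤ 1 / 3) :
    ∃ x ∈ closedBall (0 : E) 1, G (radialRetraction ε (f x)) = 0 := by
  refine exists_eq_zero_of_norm_sub_le
    (hG.comp_continuousOn ((continuousOn_radialRetraction ε).comp hf hf0)) fun x hx ↦ ?_
  rcases le_total ε ‖f x‖ with hle | hle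
  · rw [radialRetraction_of_le_norm hle]
    linarith [hGf x hx]
  · set y := radialRetraction ε (f x)
    have hy : ‖G y‖ ≤ 1 / 3 := hGε y <| mem_closedBall_zero_iff.2
      (norm_radialRetraction_of_norm_le (hf0 x hx) hle).le
    have hGfx : ‖G (f x)‖ ≤ 1 / 3 := hGε (f x) (mem_closedBall_zero_iff.2 hle)
    calc ‖G y - x‖ = ‖G y - G (f x) + (G (f x) - x)‖ := by rw [sub_add_sub_cancel]
      _ ≤ ‖G y‖ + ‖G (f x)‖ + ‖G (f x) - x‖ :=
        (norm_add_le _ _).trans (add_le_add_left (norm_sub_le _ _) _)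
      _ ≤ 1 := by linarith [hGf x hx]

-- If `f` omits `0`, a perturbation `G'` of `G` without zeros on the `ε`-sphere still vanishes at
-- the radial retraction of some `f x`. Then `ε ≤ ‖f x‖`, while `G' (f x) = 0` forces `x` near `0`.
theorem exists_eq_zero_of_leftInvOn {f G : E → E} (hf : ContinuousOn f (closedBall 0 1))
    (hG : Continuous G) (hGf : LeftInvOn G f (closedBall 0 1)) {ε : ℝ} (h0 : ‖f 0‖ < ε)
    (hGε : ∀ y ∈ closedBall (0 : E) ε, ‖G y‖ ≤ 1 / 6) : ∃ x ∈ closedBall (0 : E) 1, f x = 0 := by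
  by_contra! hne
  borelize E
  have hε : 0 < ε := (norm_nonneg _).trans_lt h0
  obtain ⟨δ₀, hδ₀, hδ₀f⟩ := Metric.mem_nhdsWithin_iff.1
    ((hf.norm 0 (by simp)).eventually_lt_const h0)
  obtain ⟨δ, hδ0, hδ⟩ := exists_between (lt_min hδ₀ (show (0 : ℝ) < 1 / 6 by norm_num))
  obtain ⟨hδδ₀, hδ1⟩ := lt_min_iff.1 hδ
  obtain ⟨G', hG', hG'G, hG'0⟩ := exists_continuous_dist_lt_forall_ne_zero Measure.addHaar hG
    (Measure.addHaar_sphere_of_ne_zero Measure.addHaar (0 : E) hε.ne') hδ0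
  simp only [dist_eq_norm] at hG'G
  have hG'f : ∀ x ∈ closedBall (0 : E) 1, ‖G' (f x) - x‖ < δ := fun x hx ↦ by
    simpa only [hGf hx] using hG'G (f x)
  obtain ⟨x, hx, hx0⟩ := exists_radialRetraction_comp_eq_zero (ε := ε) hf hne hG'
    (fun x hx ↦ by linarith [hG'f x hx])
    fun y hy ↦ by linarith [hGε y hy, hG'G y, norm_le_norm_sub_add (G' y) (G y)]
  rcases le_total ‖f x‖ ε with hle | hge
  · exact hG'0 _ (mem_sphere_zero_iff_norm.2
      (norm_radialRetraction_of_norm_le (hne x hx) hle)) hx0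
  · rw [radialRetraction_of_le_norm hge] at hx0
    have hxδ := hG'f x hx
    rw [hx0, zero_sub, norm_neg] at hxδ
    have hfx : ‖f x‖ < ε := hδ₀f ⟨mem_ball_zero_iff.2 (hxδ.trans hδδ₀), hx⟩
    exact hfx.not_ge hge

theorem image_closedBall_mem_nhds {f : E → E} (hf : ContinuousOn f (closedBall 0 1))
    (hinj : InjOn f (closedBall 0 1)) : f '' closedBall 0 1 ∈ 𝓝 (f 0) := by
  have : CompactSpace (closedBall (0 : E) 1) :=
    isCompact_iff_compactSpace.1 (isCompact_closedBall _ _)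
  obtain ⟨G, hG⟩ := ContinuousMap.exists_extension' (Y := E)
    (hf.domRestrict.isClosedEmbedding hinj.injective) ⟨Subtype.val, continuous_subtype_val⟩
  have hGf : LeftInvOn G f (closedBall 0 1) := fun x hx ↦ congrFun hG ⟨x, hx⟩
  have hG0 : G (f 0) = 0 := hGf (by simp)
  obtain ⟨ε, hε, hGε⟩ := Metric.continuousAt_iff.1 (G.continuous.continuousAt (x := f 0)) (1 / 6)
    (by norm_num)
  refine Metric.mem_nhds_iff.2 ⟨ε / 2, half_pos hε, fun c hc ↦ ?_⟩
  obtain ⟨x, hx, hxc⟩ := exists_eq_zero_of_leftInvOn (f := fun x ↦ f x - c)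
    (G := fun y ↦ G (y + c)) (ε := ε / 2) (hf.sub continuousOn_const) (by fun_prop)
    (fun x hx ↦ by simpa using hGf hx) (by rwa [← dist_eq_norm, dist_comm])
    fun y hy ↦ by
      have hyc : dist (y + c) (f 0) < ε := calc
        dist (y + c) (f 0) ≤ dist (y + c) c + dist c (f 0) := dist_triangle _ _ _
        _ < ε / 2 + ε / 2 := by
          rw [dist_add_self_left]
          exact add_lt_add_of_le_of_lt (mem_closedBall_zero_iff.1 hy) hc
        _ = ε := add_halves ε
      simpa [hG0] using (hGε hyc).le
  exact ⟨x, hx, sub_eq_zero.1 hxc⟩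

end InnerProductSpace

variable [NormedSpace ℝ E] [FiniteDimensional ℝ E]

theorem image_mem_nhds_of_continuousOn_of_injOn {f : E → E} {s : Set E} {x : E} (hs : s ∈ 𝓝 x)
    (hf : ContinuousOn f s) (hinj : InjOn f s) : f '' s ∈ 𝓝 (f x) := by
  let e : E ≃L[ℝ] _ := toEuclidean
  have ha0 : Tendsto (fun u ↦ x + e.symm u) (𝓝 0) (𝓝 x) := by
    simpa using (e.symm.continuous.const_add x).tendsto 0
  obtain ⟨ρ, hρ, hsub⟩ := Metric.nhds_basis_closedBall.mem_iff.1 (ha0 hs)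
  let a : EuclideanSpace ℝ (Fin (Module.finrank ℝ E)) → E := fun u ↦ x + e.symm (ρ • u)
  have hainj : Function.Injective a := fun u v h ↦
    smul_right_injective _ hρ.ne' (e.symm.injective (add_left_cancel h))
  have ha : MapsTo a (closedBall 0 1) s := fun u hu ↦ hsub <| by
    rw [mem_closedBall_zero_iff] at hu ⊢
    rw [norm_smul, Real.norm_of_nonneg hρ.le]
    exact mul_le_of_le_one_right hρ.le hu
  have h := image_closedBall_mem_nhds (f := e ∘ f ∘ a)
    (e.continuous.comp_continuousOn (hf.comp (by fun_prop) ha))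
    (e.injective.comp_injOn (hinj.comp hainj.injOn ha))
  have hfx : (e ∘ f ∘ a) 0 = e (f x) := by simp [a]
  rw [image_comp, image_comp, hfx, e.image_eq_preimage_symm] at h
  have h' := e.continuous.continuousAt.preimage_mem_nhds h
  rw [← preimage_comp, e.symm_comp_self, preimage_id] at h'
  exact mem_of_superset h' (image_mono ha.image_subset)

theorem isOpenMap_of_continuous_of_injective (E : Type*) [NormedAddCommGroup E]
    [NormedSpace ℝ E] [FiniteDimensional ℝ E] {N P : Type*} [TopologicalSpace N]
    [TopologicalSpace P] [ChartedSpace E N] [ChartedSpace E P] {f : N → P} (hf : Continuous f)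
    (hinj : Function.Injective f) : IsOpenMap f := by
  refine IsOpenMap.of_nhds_le fun x s hs ↦ ?_
  let φ := chartAt E x
  let ψ := chartAt E (f x)
  have hx : x ∈ φ.source := mem_chart_source E x
  have hfx : f x ∈ ψ.source := mem_chart_source E (f x)
  let S : Set E := φ.target ∩ φ.symm ⁻¹' (f ⁻¹' (s ∩ ψ.source))
  have hSmaps : ∀ u ∈ S, f (φ.symm u) ∈ s ∩ ψ.source := fun u hu ↦ hu.2
  have hS : S ∈ 𝓝 (φ x) := by
    refine inter_mem (φ.open_target.mem_nhds (φ.map_source hx))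
      ((φ.continuousAt_symm (φ.map_source hx)).preimage_mem_nhds ?_)
    rw [φ.left_inv hx]
    exact inter_mem hs (hf.continuousAt.preimage_mem_nhds (ψ.open_source.mem_nhds hfx))
  have hcont : ContinuousOn (ψ ∘ f ∘ φ.symm) S :=
    ψ.continuousOn.comp (hf.comp_continuousOn (φ.continuousOn_symm.mono inter_subset_left))
      fun u hu ↦ (hSmaps u hu).2
  have hinjS : InjOn (ψ ∘ f ∘ φ.symm) S := fun u hu v hv huv ↦
    φ.symm.injOn hu.1 hv.1 (hinj (ψ.injOn (hSmaps u hu).2 (hSmaps v hv).2 huv))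
  have himage := image_mem_nhds_of_continuousOn_of_injOn hS hcont hinjS
  have hfφ : (ψ ∘ f ∘ φ.symm) (φ x) = ψ (f x) := by simp [φ.left_inv hx]
  rw [hfφ] at himage
  filter_upwards [(ψ.continuousAt hfx).preimage_mem_nhds himage, ψ.open_source.mem_nhds hfx]
    with y ⟨u, hu, huy⟩ hy
  rw [← ψ.injOn (hSmaps u hu).2 hy huy]
  exact (hSmaps u hu).1

end InvarianceOfDomain

section LocallyUniformLimit

variable {ι N P : Type*} {l : Filter ι} [TopologicalSpace N] [UniformSpace P] {Θn : ι → N → P}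
  {Θ : N → P}

theorem eventually_mapsTo_of_tendstoUniformlyOn {K : Set N} {V : Set P} (hK : IsCompact K)
    (hΘ : ContinuousOn Θ K) (hV : IsOpen V) (hKV : MapsTo Θ K V)
    (hunif : TendstoUniformlyOn Θn Θ l K) : ∀ᶠ i in l, MapsTo (Θn i) K V := by
  obtain ⟨W, hW, -, hWV⟩ :=
    lebesgue_number_of_compact_open (hK.image_of_continuousOn hΘ) hV hKV.image_subset
  filter_upwards [hunif W hW] with i hi x hx
  exact hWV (Θ x) (mem_image_of_mem Θ hx) (hi x hx)

variable [LocallyCompactSpace N] [T2Space P] [LocallyConnectedSpace P]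

-- A connected neighbourhood of `Θ x` that stays away from the image of the boundary of a compact
-- neighbourhood `C` of `x` meets `Θn i '' interior C` in a set that is both open and closed in it.
theorem exists_nhds_eventually_image_subset_image (hΘ : Continuous Θ)
    (hinj : Function.Injective Θ) (hcont : ∀ i, Continuous (Θn i)) (hopen : ∀ i, IsOpenMap (Θn i))
    (hunif : TendstoLocallyUniformly Θn Θ l) {x : N} {U : Set N} (hU : U ∈ 𝓝 x) :
    ∃ V ∈ 𝓝 x, ∀ᶠ i in l, Θ '' V ⊆ Θn i '' U := by
  obtain ⟨C, hCx, hCU, hC⟩ := local_compact_nhds hU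
  have hxC : x ∈ interior C := mem_interior_iff_mem_nhds.2 hCx
  have hxB : Θ x ∉ Θ '' (C \ interior C) := by
    rintro ⟨z, hz, hzx⟩
    exact hz.2 (hinj hzx ▸ hxC)
  obtain ⟨W, hW, hWB⟩ := UniformSpace.mem_nhds_iff.1
    (((hC.diff isOpen_interior).image hΘ).isClosed.isOpen_compl.mem_nhds hxB)
  obtain ⟨W', hW', hWsymm, hWW'⟩ := comp_symm_mem_uniformity_sets hW
  obtain ⟨O, hOW, hO, hxO, hOconn⟩ := locallyConnectedSpace_iff_subsets_isOpen_isConnected.1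
    inferInstance (Θ x) _ (UniformSpace.ball_mem_nhds (Θ x) hW')
  refine ⟨Θ ⁻¹' O, hΘ.continuousAt.preimage_mem_nhds (hO.mem_nhds hxO), ?_⟩
  have hunifC := tendstoLocallyUniformly_iff_forall_isCompact.1 hunif C hC
  filter_upwards [hunifC W' hW', (hunifC.tendsto_at (interior_subset hxC)).eventually
    (hO.mem_nhds hxO)] with i hi hix
  have hcover : O ⊆ Θn i '' interior C := by
    refine hOconn.isPreconnected.subset_of_closure_inter_subset (hopen i _ isOpen_interior)
      ⟨Θn i x, hix, mem_image_of_mem _ hxC⟩ ?_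
    rintro y ⟨hy, hyO⟩
    obtain ⟨c, hc, rfl⟩ : y ∈ Θn i '' C :=
      closure_minimal (image_mono interior_subset) (hC.image (hcont i)).isClosed hy
    refine mem_image_of_mem _ (by_contra fun hcC ↦ ?_)
    exact hWB (hWW' (SetRel.prodMk_mem_comp (hOW hyO) (hWsymm.symm _ _ (hi c hc))))
      (mem_image_of_mem Θ ⟨hc, hcC⟩)
  exact (image_preimage_subset Θ O).trans
    (hcover.trans (image_mono (interior_subset.trans hCU)))

theorem eventually_image_subset_image_of_isCompact (hΘ : Continuous Θ)
    (hinj : Function.Injective Θ) (hcont : ∀ i, Continuous (Θn i)) (hopen : ∀ i, IsOpenMap (Θn i))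
    (hunif : TendstoLocallyUniformly Θn Θ l) {K U : Set N} (hK : IsCompact K)
    (hU : U ∈ 𝓝ˢ K) : ∀ᶠ i in l, Θ '' K ⊆ Θn i '' U := by
  refine hK.induction_on (p := fun S ↦ ∀ᶠ i in l, Θ '' S ⊆ Θn i '' U) (by simp)
    (fun s t hst ht ↦ ht.mono fun i hi ↦ (image_mono hst).trans hi) (fun s t hs ht ↦ ?_)
    fun x hx ↦ ?_
  · filter_upwards [hs, ht] with i his hit
    rw [image_union]
    exact union_subset his hit
  · obtain ⟨V, hV, hVU⟩ := exists_nhds_eventually_image_subset_image hΘ hinj hcont hopen hunif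
      (nhds_le_nhdsSet hx hU)
    exact ⟨V, mem_nhdsWithin_of_mem_nhds hV, hVU⟩

end LocallyUniformLimit

section LimitMeasure

theorem measure_ext_of_isCompact {X : Type*} [TopologicalSpace X] [T2Space X]
    [LocallyCompactSpace X] [SecondCountableTopology X] [MeasurableSpace X] [BorelSpace X]
    {μ ν : Measure X} [IsFiniteMeasureOnCompacts μ] [IsFiniteMeasureOnCompacts ν]
    (h : ∀ K, IsCompact K → μ K = ν K) : μ = ν := by
  ext A hA
  rw [hA.measure_eq_iSup_isCompact, hA.measure_eq_iSup_isCompact]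
  exact iSup_congr fun K ↦ iSup_congr fun _ ↦ iSup_congr fun hK ↦ h K hK

variable {ι N P : Type*} {l : Filter ι} [NeBot l] [TopologicalSpace N] [MeasurableSpace N]
  [UniformSpace P] [MeasurableSpace P] {Θn : ι → N → P} {Θ : N → P} {ν : Measure N}
  {μP : Measure P} {K : Set N}

theorem le_measure_image_of_tendsto_measure_image [μP.OuterRegular] (hK : IsCompact K)
    (hΘ : ContinuousOn Θ K) (hunif : TendstoUniformlyOn Θn Θ l K)
    (hlim : Tendsto (fun i ↦ μP (Θn i '' K)) l (𝓝 (ν K))) : ν K ≤ μP (Θ '' K) := by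
  refine le_of_forall_gt fun b hb ↦ ?_
  obtain ⟨V, hKV, hV, hVb⟩ := (Θ '' K).exists_isOpen_lt_of_lt b hb
  refine (le_of_tendsto hlim ?_).trans_lt hVb
  filter_upwards [eventually_mapsTo_of_tendstoUniformlyOn hK hΘ hV (mapsTo_iff_image_subset.2 hKV)
    hunif] with i hi
  exact measure_mono hi.image_subset

theorem measure_image_le_of_tendsto_measure_image [LocallyCompactSpace N] [T2Space P]
    [LocallyConnectedSpace P] [ν.OuterRegular] (hK : IsCompact K)
    (hΘ : Continuous Θ) (hinj : Function.Injective Θ) (hcont : ∀ i, Continuous (Θn i))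
    (hopen : ∀ i, IsOpenMap (Θn i)) (hunif : TendstoLocallyUniformly Θn Θ l)
    (hlim : ∀ L, IsCompact L → Tendsto (fun i ↦ μP (Θn i '' L)) l (𝓝 (ν L))) :
    μP (Θ '' K) ≤ ν K := by
  refine le_of_forall_gt fun b hb ↦ ?_
  obtain ⟨U, hKU, hU, hUb⟩ := K.exists_isOpen_lt_of_lt b hb
  obtain ⟨L, hL, hKL, hLU⟩ := exists_compact_between hK hU hKU
  refine lt_of_le_of_lt (ge_of_tendsto (hlim L hL) ?_) ((measure_mono hLU).trans_lt hUb)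
  filter_upwards [eventually_image_subset_image_of_isCompact hΘ hinj hcont hopen hunif hK
    (mem_nhdsSet_iff_forall.2 fun x hx ↦ mem_interior_iff_mem_nhds.1 (hKL hx))] with i hi
  exact measure_mono hi

theorem measure_image_eq_of_tendsto_measure_image [T2Space N] [LocallyCompactSpace N]
    [SecondCountableTopology N] [BorelSpace N] [T2Space P] [LocallyConnectedSpace P] [BorelSpace P]
    [IsFiniteMeasureOnCompacts ν] [μP.OuterRegular] (hΘ : Continuous Θ)
    (hinj : Function.Injective Θ) (hΘo : IsOpenMap Θ) (hcont : ∀ i, Continuous (Θn i))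
    (hopen : ∀ i, IsOpenMap (Θn i)) (hunif : TendstoLocallyUniformly Θn Θ l)
    (hlim : ∀ K, IsCompact K → Tendsto (fun i ↦ μP (Θn i '' K)) l (𝓝 (ν K))) (A : Set N) :
    μP (Θ '' A) = ν A := by
  have hcompact : ∀ K, IsCompact K → μP (Θ '' K) = ν K := fun K hK ↦ le_antisymm
    (measure_image_le_of_tendsto_measure_image hK hΘ hinj hcont hopen hunif hlim)
    (le_measure_image_of_tendsto_measure_image hK hΘ.continuousOn
      (tendstoLocallyUniformly_iff_forall_isCompact.1 hunif K hK) (hlim K hK))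
  have hemb : MeasurableEmbedding Θ :=
    (IsOpenEmbedding.of_continuous_injective_isOpenMap hΘ hinj hΘo).measurableEmbedding
  have hfin : IsFiniteMeasureOnCompacts (μP.comap Θ) := ⟨fun K hK ↦ by
    rw [hemb.comap_apply, hcompact K hK]
    exact hK.measure_lt_top⟩
  have heq : μP.comap Θ = ν := measure_ext_of_isCompact fun K hK ↦ by
    rw [hemb.comap_apply, hcompact K hK]
  rw [← hemb.comap_apply, heq]

end LimitMeasure

section Integral

variable {α ι : Type*} [MeasurableSpace α] {μ : Measure α} {l : Filter ι}

theorem tendsto_setIntegral_of_tendstoUniformlyOn {E : Type*} [NormedAddCommGroup E]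
    [NormedSpace ℝ E] {F : ι → α → E} {f : α → E} {s : Set α} (hs : μ s ≠ ⊤)
    (hF : ∀ i, IntegrableOn (F i) s μ) (hf : IntegrableOn f s μ)
    (hunif : TendstoUniformlyOn F f l s) :
    Tendsto (fun i ↦ ∫ x in s, F i x ∂μ) l (𝓝 (∫ x in s, f x ∂μ)) := by
  rw [Metric.tendsto_nhds]
  intro ε hε
  have hm : 0 < μ.real s + 1 := by positivity
  filter_upwards [Metric.tendstoUniformlyOn_iff.1 hunif (ε / (μ.real s + 1)) (by positivity)]
    with i hi
  calc dist (∫ x in s, F i x ∂μ) (∫ x in s, f x ∂μ) = ‖∫ x in s, (f x - F i x) ∂μ‖ := by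
        rw [dist_comm, dist_eq_norm, ← integral_sub hf (hF i)]
    _ ≤ ε / (μ.real s + 1) * μ.real s :=
        norm_setIntegral_le_of_norm_le_const hs.lt_top fun x hx ↦ by
          rw [← dist_eq_norm]
          exact (hi x hx).le
    _ < ε := by
        rw [div_mul_eq_mul_div, div_lt_iff₀ hm]
        gcongr
        exact lt_add_one _

theorem ae_nonneg_of_tendsto [NeBot l] [l.IsCountablyGenerated] {F : ι → α → ℝ} {f : α → ℝ}
    (hF : ∀ i, 0 ≤ᵐ[μ] F i) (hlim : ∀ᵐ x ∂μ, Tendsto (fun i ↦ F i x) l (𝓝 (f x))) :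
    0 ≤ᵐ[μ] f := by
  obtain ⟨u, hu⟩ := l.exists_seq_tendsto
  filter_upwards [ae_all_iff.2 fun n ↦ hF (u n), hlim] with x hx hxlim
  exact ge_of_tendsto' (hxlim.comp hu) hx

end Integral

namespace IsAbsolutelyContinuousWithJacobian

variable {N P : Type*} [TopologicalSpace N] [MeasurableSpace N] [TopologicalSpace P]
  [MeasurableSpace P] {μN : Measure N} {μP : Measure P} {Θ : N → P} {J : N → ℝ}

theorem ae_nonneg (h : IsAbsolutelyContinuousWithJacobian μN μP Θ J) : 0 ≤ᵐ[μN] J :=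
  ae_nonneg_of_forall_setIntegral_nonneg h.integrable fun A hA _ ↦
    (h.measure_image A hA).2 ▸ ENNReal.toReal_nonneg

theorem measure_image_eq_ofReal (h : IsAbsolutelyContinuousWithJacobian μN μP Θ J) {A : Set N}
    (hA : MeasurableSet A) : μP (Θ '' A) = ENNReal.ofReal (∫ x in A, J x ∂μN) := by
  rw [← (h.measure_image A hA).2, ENNReal.ofReal_toReal (h.measure_image A hA).1.ne]

theorem of_measure_image_eq_withDensity (hΘ : Continuous Θ) (hinj : Function.Injective Θ)
    (hJ : Integrable J μN) (hJ0 : 0 ≤ᵐ[μN] J)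
    (h : ∀ A, MeasurableSet A →
      μP (Θ '' A) = μN.withDensity (fun x ↦ ENNReal.ofReal (J x)) A) :
    IsAbsolutelyContinuousWithJacobian μN μP Θ J := by
  refine ⟨hΘ, hinj, hJ, fun A hA ↦ ?_⟩
  rw [h A hA, withDensity_apply _ hA,
    ← ofReal_integral_eq_lintegral_ofReal hJ.integrableOn (ae_restrict_of_ae hJ0)]
  exact ⟨ENNReal.ofReal_lt_top, ENNReal.toReal_ofReal (setIntegral_nonneg_of_ae hJ0)⟩

theorem tendsto_measure_image {ι : Type*} {l : Filter ι} {Θn : ι → N → P} {Jn : ι → N → ℝ}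
    (hn : ∀ i, IsAbsolutelyContinuousWithJacobian μN μP (Θn i) (Jn i)) (hJ : Integrable J μN)
    (hJ0 : 0 ≤ᵐ[μN] J) {A : Set N} (hA : MeasurableSet A) (hμA : μN A ≠ ⊤)
    (hunif : TendstoUniformlyOn Jn J l A) :
    Tendsto (fun i ↦ μP (Θn i '' A)) l
      (𝓝 (μN.withDensity (fun x ↦ ENNReal.ofReal (J x)) A)) := by
  simp only [fun i ↦ (hn i).measure_image_eq_ofReal hA]
  rw [withDensity_apply _ hA,
    ← ofReal_integral_eq_lintegral_ofReal hJ.integrableOn (ae_restrict_of_ae hJ0)]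
  exact ENNReal.tendsto_ofReal (tendsto_setIntegral_of_tendstoUniformlyOn hμA
    (fun i ↦ (hn i).integrable.integrableOn) hJ.integrableOn hunif)

end IsAbsolutelyContinuousWithJacobian

theorem uniform_limit_absolutely_continuous_general (E : Type*) [NormedAddCommGroup E]
    [NormedSpace ℝ E] [FiniteDimensional ℝ E] {ι N P : Type*} {l : Filter ι} [NeBot l]
    [l.IsCountablyGenerated] [TopologicalSpace N] [SecondCountableTopology N] [ChartedSpace E N]
    [MeasurableSpace N] [BorelSpace N] [UniformSpace P] [T2Space P] [ChartedSpace E P]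
    [MeasurableSpace P] [BorelSpace P] {μN : Measure N} [IsLocallyFiniteMeasure μN]
    {μP : Measure P} [μP.OuterRegular] {Θn : ι → N → P} {Jn : ι → N → ℝ}
    (hn : ∀ i, IsAbsolutelyContinuousWithJacobian μN μP (Θn i) (Jn i)) {Θ : N → P}
    (hΘ_inj : Function.Injective Θ) (hΘ_unif : TendstoLocallyUniformly Θn Θ l) {J : N → ℝ}
    (hJ_int : Integrable J μN) (hJ_unif : TendstoLocallyUniformly Jn J l) :
    IsAbsolutelyContinuousWithJacobian μN μP Θ J := by
  have hΘ : Continuous Θ := hΘ_unif.continuous (.of_forall fun i ↦ (hn i).continuous)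
  have : T2Space N := T2Space.of_injective_continuous hΘ_inj hΘ
  have : LocallyCompactSpace N := ChartedSpace.locallyCompactSpace E N
  have : LocallyConnectedSpace P := ChartedSpace.locallyConnectedSpace E P
  have hopen : ∀ f : N → P, Continuous f → Function.Injective f → IsOpenMap f :=
    fun _ ↦ isOpenMap_of_continuous_of_injective E
  have hJ_unif' := tendstoLocallyUniformly_iff_forall_isCompact.1 hJ_unif
  have hJ0 : 0 ≤ᵐ[μN] J := ae_nonneg_of_tendsto (fun i ↦ (hn i).ae_nonneg)
    (.of_forall fun x ↦ (hJ_unif' {x} isCompact_singleton).tendsto_at rfl)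
  have hfin := isFiniteMeasure_withDensity_ofReal hJ_int.2
  exact .of_measure_image_eq_withDensity hΘ hΘ_inj hJ_int hJ0 fun A _ ↦
    measure_image_eq_of_tendsto_measure_image hΘ hΘ_inj (hopen Θ hΘ hΘ_inj)
      (fun i ↦ (hn i).continuous) (fun i ↦ hopen _ (hn i).continuous (hn i).injective) hΘ_unif
      (fun K hK ↦ IsAbsolutelyContinuousWithJacobian.tendsto_measure_image hn hJ_int hJ0
        hK.measurableSet hK.measure_lt_top.ne (hJ_unif' K hK)) A

/-- `N` and `P` are second countable Hausdorff topological manifolds without boundary, of the same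
dimension `d`. The distance of `P` induces its topology and may take the value `∞`, as the
Riemannian distance of a disconnected manifold does. The measures are arbitrary Borel measures,
locally finite on `N` and finite on `P`; Riemannian volumes are a special case. -/
theorem uniform_limit_absolutely_continuous
    {d : ℕ} {N P : Type*}
    [TopologicalSpace N] [T2Space N] [SecondCountableTopology N]
    [ChartedSpace (EuclideanSpace ℝ (Fin d)) N] [MeasurableSpace N] [BorelSpace N]
    [EMetricSpace P] [SecondCountableTopology P]
    [ChartedSpace (EuclideanSpace ℝ (Fin d)) P] [MeasurableSpace P] [BorelSpace P]
    (μN : Measure N) [IsLocallyFiniteMeasure μN]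
    (μP : Measure P) [IsFiniteMeasure μP]
    (Θn : ℕ → N → P) (Jn : ℕ → N → ℝ)
    (hn : ∀ n, IsAbsolutelyContinuousWithJacobian μN μP (Θn n) (Jn n))
    (Θ : N → P) (hΘ_cont : Continuous Θ) (hΘ_inj : Function.Injective Θ)
    (hΘ_unif : TendstoUniformly Θn Θ atTop)
    (J : N → ℝ) (hJ_cont : Continuous J) (hJ_int : Integrable J μN)
    (hJ_unif : TendstoUniformly Jn J atTop) :
    IsAbsolutelyContinuousWithJacobian μN μP Θ J := by
  exact uniform_limit_absolutely_continuous_general (EuclideanSpace ℝ (Fin d)) hn hΘ_inj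
    hΘ_unif.tendstoLocallyUniformly hJ_int hJ_unif.tendstoLocallyUniformly
end
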